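/- arXiv:2602.07920 — 11 statements merged into one kernel-verified Lean document; each statement's English description precedes it below -/
import Mathlib

section
/- Let n ≥ 2 and let M be the position matrix of a single-shelf shuffle. Then the kernel of the linear map x ↦ Mx on ℝ^n is exactly the span of the vectors η^{(j)} := e_j − e_{n−j+1} for 1 ≤ j ≤ ⌊n/2⌋, where e_k denotes the k-th standard basis vector of ℝ^n. In particular, the kernel of M has dimension ⌊n/2⌋. -/
/-!
Up to the invertible diagonal factor `2^{-(i+1)}`, the matrix `shelfM n` is `L (1 + J)`, where
`L` is the Pascal matrix `C(i, j)` and `J` reverses the coordinates. Since `L` is lower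
unitriangular, the kernel is that of `1 + J`, i.e. the space of vectors that are antisymmetric under
reversal (`mem_ker_shelfM`). Such a vector is determined by its first `n / 2` coordinates, which are
also its coefficients with respect to the vectors `e_j - e_{n-1-j}` (`sum_shelfEta_apply`); hence
these vectors form a basis of the kernel.
-/

open Matrix BigOperators

/-- Position matrix of a single-shelf shuffle on `n` cards (0-indexed: row `i`
corresponds to card `i+1`, column `j` to position `j+1`):
`M(i,j) = 2^{-(i+1)} (C(i, j) + C(i, n-1-j))`. -/
noncomputable def shelfM (n : ℕ) : Matrix (Fin n) (Fin n) ℝ :=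
  fun i j => (1/2 : ℝ)^(i.val + 1) *
    ((Nat.choose i.val j.val : ℝ) + (Nat.choose i.val (n - 1 - j.val) : ℝ))

/-- A vector annihilated by the Pascal matrix is zero, the matrix being lower unitriangular. -/
lemma eq_zero_of_pascal {n : ℕ} (y : Fin n → ℝ)
    (h : ∀ i : Fin n, ∑ j : Fin n, (Nat.choose i j : ℝ) * y j = 0) : y = 0 := by
  have key : ∀ m : ℕ, ∀ hm : m < n, y ⟨m, hm⟩ = 0 := by
    intro m
    induction m using Nat.strong_induction_on with
    | _ m ih =>
      intro hm
      have h1 := h ⟨m, hm⟩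
      rw [Finset.sum_eq_single ⟨m, hm⟩] at h1
      · simpa using h1
      · intro j _ hj
        rcases lt_trichotomy (j : ℕ) m with hlt | heq | hgt
        · rw [ih j hlt j.2, mul_zero]
        · exact absurd (Fin.ext heq) hj
        · simp [Nat.choose_eq_zero_of_lt hgt]
      · simp
  funext i
  exact key i i.2

lemma shelfM_mulVec (n : ℕ) (x : Fin n → ℝ) (i : Fin n) :
    (shelfM n *ᵥ x) i =
      (1/2 : ℝ)^(i.val + 1) * ∑ j : Fin n, (Nat.choose i j : ℝ) * (x j + x j.rev) := by
  have h : ∑ j : Fin n, (Nat.choose i j : ℝ) * x j.rev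
      = ∑ j : Fin n, (Nat.choose i (n - 1 - j) : ℝ) * x j := by
    rw [← Equiv.sum_comp Fin.revPerm]
    refine Finset.sum_congr rfl fun j _ => ?_
    have : n - (j + 1) = n - 1 - (j : ℕ) := by omega
    simp [Fin.val_rev, this]
  simp only [mul_add, Finset.sum_add_distrib, h]
  simp only [Matrix.mulVec, dotProduct, shelfM, Finset.mul_sum, ← Finset.sum_add_distrib]
  exact Finset.sum_congr rfl fun j _ => by ring

lemma mem_ker_shelfM (n : ℕ) (x : Fin n → ℝ) :
    x ∈ LinearMap.ker (Matrix.mulVecLin (shelfM n)) ↔ ∀ j, x j + x j.rev = 0 := by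
  rw [LinearMap.mem_ker, Matrix.mulVecLin_apply]
  constructor
  · intro h
    refine congrFun (eq_zero_of_pascal (fun j => x j + x j.rev) fun i => ?_)
    have hi := congrFun h i
    rw [shelfM_mulVec] at hi
    exact (mul_eq_zero.mp hi).resolve_left (by positivity)
  · intro h
    funext i
    simp [shelfM_mulVec, h]

/-- The vector `e_j - e_{n-1-j}` (0-indexed), for `j < n / 2`. -/
noncomputable def shelfEta (n : ℕ) (j : Fin (n / 2)) : Fin n → ℝ :=
  Pi.single (⟨j, by omega⟩ : Fin n) 1 - Pi.single (⟨n - 1 - (j : ℕ), by omega⟩ : Fin n) 1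

lemma shelfEta_apply (n : ℕ) (j : Fin (n / 2)) (k : Fin n) :
    shelfEta n j k =
      (if (k : ℕ) = j then 1 else 0) - (if (k : ℕ) = n - 1 - j then 1 else 0) := by
  simp [shelfEta, Pi.single_apply, Fin.ext_iff]

lemma shelfEta_mem_ker (n : ℕ) (j : Fin (n / 2)) :
    shelfEta n j ∈ LinearMap.ker (Matrix.mulVecLin (shelfM n)) := by
  rw [mem_ker_shelfM]
  intro k
  have h1 : ((k.rev : Fin n) : ℕ) = j ↔ (k : ℕ) = n - 1 - j := by rw [Fin.val_rev]; omega
  have h2 : ((k.rev : Fin n) : ℕ) = n - 1 - j ↔ (k : ℕ) = j := by rw [Fin.val_rev]; omega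
  simp only [shelfEta_apply, h1, h2]
  ring

/-- The first `n / 2` coordinates of a combination of the `shelfEta n j` are its coefficients. -/
lemma sum_shelfEta_apply (n : ℕ) (g : Fin (n / 2) → ℝ) (k : Fin n) (hk : (k : ℕ) < n / 2) :
    (∑ j, g j • shelfEta n j) k = g ⟨k, hk⟩ := by
  rw [Finset.sum_apply, Finset.sum_eq_single ⟨k, hk⟩]
  · have : (k : ℕ) ≠ n - 1 - k := by omega
    simp [shelfEta_apply, this]
  · intro j _ hj
    have h1 : (k : ℕ) ≠ j := fun h => hj (Fin.ext h.symm)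
    have h2 : (k : ℕ) ≠ n - 1 - j := by omega
    simp [shelfEta_apply, h1, h2]
  · simp

lemma linearIndependent_shelfEta (n : ℕ) : LinearIndependent ℝ (shelfEta n) := by
  rw [Fintype.linearIndependent_iff]
  intro g hg i
  rw [← sum_shelfEta_apply n g ⟨i, by omega⟩ i.2, hg, Pi.zero_apply]

lemma ker_shelfM_eq_span (n : ℕ) :
    LinearMap.ker (Matrix.mulVecLin (shelfM n)) =
      Submodule.span ℝ (Set.range (shelfEta n)) := by
  apply le_antisymm
  · intro x hx
    set s := ∑ j : Fin (n / 2), x ⟨j, by omega⟩ • shelfEta n j with hs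
    have hs_mem : s ∈ Submodule.span ℝ (Set.range (shelfEta n)) :=
      Submodule.sum_mem _ fun j _ =>
        Submodule.smul_mem _ _ (Submodule.subset_span (Set.mem_range_self j))
    have hs_ker : s ∈ LinearMap.ker (Matrix.mulVecLin (shelfM n)) :=
      Submodule.sum_mem _ fun j _ => Submodule.smul_mem _ _ (shelfEta_mem_ker n j)
    rw [mem_ker_shelfM] at hx hs_ker
    have hlow : ∀ k : Fin n, (k : ℕ) < n / 2 → x k = s k := fun k hk =>
      (sum_shelfEta_apply n (fun j => x ⟨j, by omega⟩) k hk).symm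
    -- Both `x` and `s` are antisymmetric, so agreement on the first half gives equality.
    have hxs : x = s := by
      funext k
      by_cases hk : (k : ℕ) < n / 2
      · exact hlow k hk
      · by_cases hk' : ((k.rev : Fin n) : ℕ) < n / 2
        · linarith [hlow _ hk', hx k, hs_ker k]
        · -- The only remaining index is the middle one, for odd `n`; both values vanish there.
          have hmid : k.rev = k := by
            rw [Fin.val_rev] at hk'
            apply Fin.ext
            rw [Fin.val_rev]
            omega
          have h1 := hx k
          have h2 := hs_ker k
          rw [hmid] at h1 h2
          linarith
    rwa [hxs]
  · rw [Submodule.span_le]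
    rintro _ ⟨j, rfl⟩
    exact shelfEta_mem_ker n j

theorem kernel_of_shelfM (n : ℕ) (hn : 2 ≤ n) :
    LinearMap.ker (Matrix.mulVecLin (shelfM n)) =
      Submodule.span ℝ {v : Fin n → ℝ | ∃ j : Fin n, (j : ℕ) < n / 2 ∧
        v = Pi.single j 1 - Pi.single (⟨n - 1 - (j : ℕ), by omega⟩ : Fin n) 1} ∧
    Module.finrank ℝ (LinearMap.ker (Matrix.mulVecLin (shelfM n))) = n / 2 := by
  have hset : {v : Fin n → ℝ | ∃ j : Fin n, (j : ℕ) < n / 2 ∧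
      v = Pi.single j 1 - Pi.single (⟨n - 1 - (j : ℕ), by omega⟩ : Fin n) 1} =
      Set.range (shelfEta n) := by
    ext v
    constructor
    · rintro ⟨j, hj, rfl⟩
      exact ⟨⟨j, hj⟩, rfl⟩
    · rintro ⟨j, rfl⟩
      exact ⟨⟨j, by omega⟩, j.2, rfl⟩
  rw [hset]
  refine ⟨ker_shelfM_eq_span n, ?_⟩
  rw [ker_shelfM_eq_span, finrank_span_eq_card (linearIndependent_shelfEta n), Fintype.card_fin]
end

section
/- Let n ≥ 2 and let M be the position matrix of a single-shelf shuffle. The set of eigenvalues of M is exactly {0} ∪ {2^{−2i} : i ∈ ℤ, 0 ≤ 2i ≤ n−1}; equivalently, the nonzero eigenvalues of M are exactly the numbers 2^{−j} for even integers 0 ≤ j ≤ n−1. Moreover, for each even integer 0 ≤ j ≤ n−1, the eigenspace of M for the eigenvalue 2^{−j} is one-dimensional. -/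
open Matrix BigOperators

/-- The binomial average of `x ↦ (x choose d)`: it equals `2^{-d} (i choose d)`, written here
without division. -/
lemma sum_choose_mul_choose (i d m : ℕ) (h : i < m) :
    ∑ j ∈ Finset.range m, (i.choose j : ℝ) * (j.choose d) * 2 ^ d = i.choose d * 2 ^ i := by
  induction i generalizing d m with
  | zero =>
    obtain ⟨m, rfl⟩ : ∃ k, m = k + 1 := ⟨m - 1, by omega⟩
    rw [Finset.sum_range_succ']
    cases d <;> simp
  | succ i ih =>
    obtain ⟨m, rfl⟩ : ∃ k, m = k + 1 := ⟨m - 1, by omega⟩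
    -- Pascal's rule in the upper index splits the sum into one with `j` and one with `j + 1`.
    have key : ∀ f : ℕ → ℝ, ∑ j ∈ Finset.range (m + 1), ((i + 1).choose j : ℝ) * f j
        = ∑ j ∈ Finset.range (m + 1), (i.choose j : ℝ) * f j
          + ∑ j ∈ Finset.range m, (i.choose j : ℝ) * f (j + 1) := by
      intro f
      rw [Finset.sum_range_succ', Finset.sum_range_succ' (n := m), add_right_comm,
        ← Finset.sum_add_distrib]
      simp [Nat.choose_succ_succ, add_mul, add_comm]
    have h1 := ih d (m + 1) (by omega)
    have h2 := ih d m (by omega)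
    simp only [mul_assoc] at *
    rw [key, h1]
    cases d with
    | zero => simp at h2 ⊢; rw [h2]; ring
    | succ d =>
      have h3 := ih d m (by omega)
      have : ∑ j ∈ Finset.range m, (i.choose j : ℝ) * (((j + 1).choose (d + 1) : ℝ) * 2 ^ (d + 1))
          = 2 * ∑ j ∈ Finset.range m, (i.choose j : ℝ) * ((j.choose d : ℝ) * 2 ^ d)
            + ∑ j ∈ Finset.range m, (i.choose j : ℝ) * ((j.choose (d + 1) : ℝ) * 2 ^ (d + 1)) := by
        rw [Finset.mul_sum, ← Finset.sum_add_distrib]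
        refine Finset.sum_congr rfl fun j _ => ?_
        rw [Nat.choose_succ_succ]; push_cast; ring
      rw [this, h2, h3, Nat.choose_succ_succ]; push_cast; ring

/-- Inclusion–exclusion for the `d`-subsets of an `N`-set that avoid a given `j`-subset; as a
function of `j` it expands `(N - j choose d)` in the basis `(j choose k)`. -/
lemma choose_sub_eq_alternating_sum (j N d : ℕ) (h : j ≤ N) :
    ((N - j).choose d : ℝ) =
      ∑ k ∈ Finset.range (d + 1), (-1 : ℝ) ^ k * j.choose k * (N - k).choose (d - k) := by
  induction j generalizing N d with
  | zero => rw [Finset.sum_range_succ']; simp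
  | succ j ih =>
    obtain ⟨N, rfl⟩ : ∃ k, N = k + 1 := ⟨N - 1, by omega⟩
    cases d with
    | zero => simp
    | succ d =>
      have h1 := ih (N + 1) (d + 1) (by omega)
      have h2 := ih N d (by omega)
      have e : N + 1 - j = (N - j) + 1 := by omega
      rw [e, Nat.choose_succ_succ] at h1
      rw [Finset.sum_range_succ'] at h1 ⊢
      have h3 : ∑ k ∈ Finset.range (d + 1), (-1 : ℝ) ^ (k + 1) * (j + 1).choose (k + 1) *
            (N + 1 - (k + 1)).choose (d + 1 - (k + 1))
          = ∑ k ∈ Finset.range (d + 1), (-1 : ℝ) ^ (k + 1) * j.choose (k + 1) *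
            (N + 1 - (k + 1)).choose (d + 1 - (k + 1))
            - ∑ k ∈ Finset.range (d + 1), (-1 : ℝ) ^ k * j.choose k * (N - k).choose (d - k) := by
        rw [← Finset.sum_sub_distrib]
        refine Finset.sum_congr rfl fun k _ => ?_
        rw [Nat.choose_succ_succ, Nat.add_sub_add_right, Nat.add_sub_add_right]; push_cast; ring
      rw [h3, ← h2]
      push_cast at h1
      simp only [Nat.add_sub_add_right, Nat.choose_zero_right, pow_zero,
        Nat.sub_zero, Nat.succ_eq_add_one] at h1 ⊢
      linarith

/-- The matrix whose `d`-th column is the function `x ↦ (x choose d)` on `{0, …, n - 1}`. -/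
def pascalB (n : ℕ) : Matrix (Fin n) (Fin n) ℝ := fun i d => (i.val.choose d.val : ℝ)

/-- The matrix of `shelfM (N + 1)` in the basis given by the columns of `pascalB (N + 1)`. -/
noncomputable def shelfT (N : ℕ) : Matrix (Fin (N + 1)) (Fin (N + 1)) ℝ := fun k d =>
  if k.val ≤ d.val then (1 / 2 : ℝ) ^ (k.val + 1) *
    ((if k = d then 1 else 0) + (-1) ^ k.val * ((N - k.val).choose (d.val - k.val) : ℝ)) else 0

lemma isUnit_pascalB (n : ℕ) : IsUnit (pascalB n) := by
  rw [Matrix.isUnit_iff_isUnit_det, Matrix.det_of_isLowerTriangular]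
  · simp [pascalB]
  · intro i j hij
    have : i.val < j.val := hij
    simp [pascalB, Nat.choose_eq_zero_of_lt this]

lemma shelfM_mul_pascalB (N : ℕ) :
    shelfM (N + 1) * pascalB (N + 1) = pascalB (N + 1) * shelfT N := by
  ext i d
  have hi : i.val < N + 1 := i.2
  have hd : d.val < N + 1 := d.2
  have avg : ∀ k : ℕ, ∑ j ∈ Finset.range (N + 1), (i.val.choose j : ℝ) * (j.choose k)
      = i.val.choose k * 2 ^ i.val * (1 / 2) ^ k := fun k => by
    rw [← sum_choose_mul_choose i.val k _ hi, Finset.sum_mul]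
    refine Finset.sum_congr rfl fun j _ => ?_
    rw [mul_assoc _ ((2 : ℝ) ^ k), ← mul_pow]; norm_num
  have reflect : ∑ j ∈ Finset.range (N + 1), (i.val.choose (N - j) : ℝ) * (j.choose d.val)
      = ∑ j ∈ Finset.range (N + 1), (i.val.choose j : ℝ) * ((N - j).choose d.val) := by
    rw [← Finset.sum_range_reflect]
    refine Finset.sum_congr rfl fun j hj => ?_
    have := Finset.mem_range.1 hj
    rw [show N + 1 - 1 - j = N - j by omega, show N - (N - j) = j by omega]
  have second : ∑ j ∈ Finset.range (N + 1), (i.val.choose (N - j) : ℝ) * (j.choose d.val)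
      = ∑ k ∈ Finset.range (d.val + 1), (-1 : ℝ) ^ k * ((N - k).choose (d.val - k)) *
        (i.val.choose k * 2 ^ i.val * (1 / 2) ^ k) := by
    rw [reflect]
    simp_rw [← avg, Finset.mul_sum]
    rw [Finset.sum_comm]
    refine Finset.sum_congr rfl fun j hj => ?_
    have := Finset.mem_range.1 hj
    rw [choose_sub_eq_alternating_sum j N d.val (by omega), Finset.mul_sum]
    exact Finset.sum_congr rfl fun k _ => by ring
  have hp : (1 / 2 : ℝ) ^ i.val * 2 ^ i.val = 1 := by rw [← mul_pow]; norm_num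
  have lhs : (shelfM (N + 1) * pascalB (N + 1)) i d = (1 / 2 : ℝ) ^ (i.val + 1) *
      (∑ j ∈ Finset.range (N + 1), (i.val.choose j : ℝ) * (j.choose d.val)
        + ∑ j ∈ Finset.range (N + 1), (i.val.choose (N - j) : ℝ) * (j.choose d.val)) := by
    rw [Matrix.mul_apply, ← Finset.sum_add_distrib, Finset.mul_sum, Finset.sum_range]
    refine Finset.sum_congr rfl fun j _ => ?_
    simp only [shelfM, pascalB, Nat.add_sub_cancel]; ring
  have rhs : (pascalB (N + 1) * shelfT N) i d =
      ∑ k ∈ Finset.range (d.val + 1), (i.val.choose k : ℝ) * ((1 / 2 : ℝ) ^ (k + 1) *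
        ((if k = d.val then 1 else 0) + (-1) ^ k * ((N - k).choose (d.val - k) : ℝ))) := by
    have hs : Finset.range (d.val + 1) = (Finset.range (N + 1)).filter (· ≤ d.val) := by
      ext k; simp only [Finset.mem_range, Finset.mem_filter]; omega
    rw [hs, Finset.sum_filter, Finset.sum_range, Matrix.mul_apply]
    refine Finset.sum_congr rfl fun k _ => ?_
    simp only [shelfT, pascalB, Fin.ext_iff, mul_ite, mul_zero]
  rw [lhs, rhs, avg, second]
  simp only [mul_add, Finset.sum_add_distrib, mul_ite, mul_one, mul_zero, Finset.sum_ite_eq',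
    Finset.mem_range, Nat.lt_succ_self, if_true, Finset.mul_sum]
  congr 1
  · linear_combination (1 / 2 : ℝ) * (i.val.choose d.val) * (1 / 2) ^ d.val * hp
  · refine Finset.sum_congr rfl fun k _ => ?_
    linear_combination (1 / 2 : ℝ) * (-1 : ℝ) ^ k * ((N - k).choose (d.val - k)) *
      (i.val.choose k) * (1 / 2) ^ k * hp

lemma shelfT_diag (N : ℕ) (d : Fin (N + 1)) :
    shelfT N d d = if Even d.val then (1 / 2 : ℝ) ^ d.val else 0 := by
  simp only [shelfT, le_refl, if_true, Nat.sub_self, Nat.choose_zero_right]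
  split_ifs with h
  · rw [h.neg_one_pow]; push_cast; ring
  · rw [(Nat.not_even_iff_odd.1 h).neg_one_pow]; push_cast; ring

lemma charpoly_shelfM (N : ℕ) : (shelfM (N + 1)).charpoly =
    (Finset.univ.val.map fun d : Fin (N + 1) =>
      Polynomial.X - Polynomial.C (if Even d.val then (1 / 2 : ℝ) ^ d.val else 0)).prod := by
  obtain ⟨u, hu⟩ := isUnit_pascalB (N + 1)
  have hM : shelfM (N + 1) = u.val * shelfT N * u⁻¹.val := by
    rw [Units.eq_mul_inv_iff_mul_eq, hu]
    exact shelfM_mul_pascalB N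
  rw [hM, Matrix.coe_units_inv, Matrix.charpoly_units_conj, Matrix.charpoly_of_isUpperTriangular]
  · simp only [shelfT_diag]; rfl
  · intro i j hij
    have : ¬ i.val ≤ j.val := not_le.2 hij
    simp [shelfT, this]

lemma roots_charpoly_shelfM (N : ℕ) : (shelfM (N + 1)).charpoly.roots =
    Finset.univ.val.map fun d : Fin (N + 1) => if Even d.val then (1 / 2 : ℝ) ^ d.val else 0 := by
  have h := Polynomial.roots_multiset_prod_X_sub_C
    (Finset.univ.val.map fun d : Fin (N + 1) => if Even d.val then (1 / 2 : ℝ) ^ d.val else 0)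
  rw [Multiset.map_map] at h
  rw [charpoly_shelfM]
  exact h

lemma hasEigenvalue_shelfM_iff (N : ℕ) (μ : ℝ) :
    Module.End.HasEigenvalue
      ((Matrix.mulVecLin (shelfM (N + 1))) : Module.End ℝ (Fin (N + 1) → ℝ)) μ ↔
    ∃ d : Fin (N + 1), (if Even d.val then (1 / 2 : ℝ) ^ d.val else 0) = μ := by
  rw [Module.End.hasEigenvalue_iff_isRoot_charpoly, Matrix.charpoly_mulVecLin,
    ← Polynomial.mem_roots (Matrix.charpoly_monic _).ne_zero, roots_charpoly_shelfM]
  simp only [Multiset.mem_map, Finset.mem_val, Finset.mem_univ, true_and]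

theorem spectrum_of_shelfM (n : ℕ) (hn : 2 ≤ n) :
    ({μ : ℝ | Module.End.HasEigenvalue
        ((Matrix.mulVecLin (shelfM n)) : Module.End ℝ (Fin n → ℝ)) μ} =
      {0} ∪ {μ : ℝ | ∃ j : ℕ, j ≤ n - 1 ∧ Even j ∧ μ = (1/2 : ℝ)^j}) ∧
    (∀ j : ℕ, j ≤ n - 1 → Even j →
      Module.finrank ℝ
        (Module.End.eigenspace
          ((Matrix.mulVecLin (shelfM n)) : Module.End ℝ (Fin n → ℝ)) ((1/2 : ℝ)^j)) = 1) := by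
  obtain ⟨N, rfl⟩ : ∃ k, n = k + 1 := ⟨n - 1, by omega⟩
  rw [Nat.add_sub_cancel]
  constructor
  · ext μ
    simp only [Set.mem_ofPred_eq, Set.mem_union, Set.mem_singleton_iff, hasEigenvalue_shelfM_iff]
    constructor
    · rintro ⟨d, rfl⟩
      split_ifs with h
      · exact Or.inr ⟨d, by omega, h, rfl⟩
      · exact Or.inl rfl
    · rintro (rfl | ⟨j, hj, he, rfl⟩)
      · exact ⟨⟨1, by omega⟩, by simp⟩
      · exact ⟨⟨j, by omega⟩, by simp [he]⟩
  · intro j hj he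
    apply le_antisymm
    · refine (LinearMap.finrank_eigenspace_le _ _).trans ?_
      rw [Matrix.charpoly_mulVecLin, ← Polynomial.count_roots, roots_charpoly_shelfM,
        Multiset.count_map]
      change (Finset.univ.filter fun d : Fin (N + 1) =>
        (1 / 2 : ℝ) ^ j = if Even d.val then (1 / 2 : ℝ) ^ d.val else 0).card ≤ 1
      -- Distinct powers of `1 / 2` differ, so `j` is the only index with this diagonal entry.
      have uniq : ∀ d : Fin (N + 1),
          (1 / 2 : ℝ) ^ j = (if Even d.val then (1 / 2 : ℝ) ^ d.val else 0) → d.val = j := by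
        intro d hd
        split_ifs at hd
        · exact (pow_right_injective₀ (by norm_num) (by norm_num) hd).symm
        · exact absurd hd (by positivity)
      refine Finset.card_le_one.2 fun a ha b hb => Fin.ext ?_
      rw [uniq a (Finset.mem_filter.1 ha).2, uniq b (Finset.mem_filter.1 hb).2]
    · have h := (hasEigenvalue_shelfM_iff N ((1 / 2 : ℝ) ^ j)).2 ⟨⟨j, by omega⟩, by simp [he]⟩
      exact Submodule.one_le_finrank_iff.2 h
end

section
/- Let n ≥ 2 and let M be the position matrix of a single-shelf shuffle. For every even integer i with 0 ≤ i ≤ n−1, the vector ζ^{(i)} is an eigenvector of M with eigenvalue 2^{−i}, i.e., M ζ^{(i)} = 2^{−i} ζ^{(i)} and ζ^{(i)} ≠ 0. -/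
/-!
Write `N = n - 1`, use 0-indexed positions, and put `c_t = t! w_t`, so that
`ζ(k) = ∑_t c_t binom(k, t)`. Row `a` of `M` sends `f` to
`2^{-(a+1)} ∑_j binom(a, j) (f(j) + f(N - j))`. On the basis `k ↦ binom(k, t)` this is computed by

* `sum_choose_mul_choose`: `∑_j binom(a, j) binom(j, s) = binom(a, s) 2^{a-s}`;
* `choose_sub_expand`: `binom(N - j, t) = ∑_s (-1)^s binom(j, s) binom(N - s, t - s)`.

Comparing coefficients of `binom(a, s)`, the eigenvector equation reduces to
`2^{-i} c_s = 2^{-s-1} (c_s + (-1)^s ∑_t binom(N - s, t - s) c_t)` (`coeff_identity`). The factorials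
in `w_t` are such that, with `m = i - s`, the sum over `t` is a multiple of
`∑_k binom(m, k) 2^k B_k = 2^m B_m(1/2) = (2 - 2^m) B_m` (`sum_two_pow_bernoulli`). The identity
then holds because `(-1)^s = (-1)^m`, and for odd `m` either `m = 1`, where `2 - 2^m = 0`, or
`B_m = 0`. Since `c_i ≠ 0` and the functions `binom(·, t)`, `t ≤ i`, are triangular on
the points `0, …, i ≤ N`, the vector `ζ` is nonzero.
-/

open Matrix BigOperators

/-- Coefficient `w_t^{(i)} = 2^{i-t} B_{i-t} C(i,t) (n-t-1)!/(n-i-1)!`. -/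
noncomputable def wCoeff (n i t : ℕ) : ℝ :=
  (2 : ℝ)^(i - t) * ((bernoulli (i - t) : ℚ) : ℝ) * (Nat.choose i t : ℝ) *
    (Nat.factorial (n - t - 1) : ℝ) / (Nat.factorial (n - i - 1) : ℝ)

/-- The eigenvector `ζ^{(i)}` with coordinates
`ζ^{(i)}(k) = Σ_{t=0}^{i} w_t^{(i)} (k-1)^{\underline t}` (0-indexed coordinates). -/
noncomputable def zetaVec (n i : ℕ) : Fin n → ℝ :=
  fun k => ∑ t ∈ Finset.range (i + 1), wCoeff n i t * (Nat.descFactorial k.val t : ℝ)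

open Polynomial in
/-- Newton expansion of `x ↦ binom(N - x, t)` at `x = j`, obtained by comparing coefficients in
`(1+X)^(N-j) = ((1+X) - X)^j (1+X)^(N-j)`. -/
theorem choose_sub_expand (N j t i : ℕ) (hj : j ≤ N) (ht : t ≤ i) :
    ((N - j).choose t : ℝ) = ∑ s ∈ Finset.range (i + 1),
      (j.choose s : ℝ) * ((-1) ^ s * if s ≤ t then ((N - s).choose (t - s) : ℝ) else 0) := by
  have h : ((1 + X : ℝ[X])) ^ (N - j) = ∑ s ∈ Finset.range (j + 1),
      C ((j.choose s : ℝ) * (-1) ^ s) * (X ^ s * (1 + X) ^ (N - s)) := by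
    have h1 : (1 + X : ℝ[X]) ^ (N - j) = (-X + (1 + X)) ^ j * (1 + X) ^ (N - j) := by
      simp
    rw [h1, add_pow, Finset.sum_mul]
    refine Finset.sum_congr rfl fun s hs => ?_
    have hs' : s ≤ j := by simpa [Nat.lt_succ_iff] using hs
    rw [show N - s = (j - s) + (N - j) by omega, pow_add, neg_pow]
    simp only [map_mul, map_pow, map_natCast, map_neg, map_one]
    ring
  have h2 := congrArg (fun p => p.coeff t) h
  simp only [coeff_one_add_X_pow, finsetSum_coeff, coeff_C_mul, coeff_X_pow_mul', mul_assoc] at h2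
  rw [h2]
  -- Both ranges contain every `s` with a nonzero term, namely `s ≤ min j t`.
  rw [← Finset.eventually_constant_sum (n := i + j + 1) (N := j + 1) _ (by omega),
    ← Finset.eventually_constant_sum (n := i + j + 1) (N := i + 1) _ (by omega)]
  · intro s hs
    simp [show ¬ s ≤ t by omega]
  · intro s hs
    simp [Nat.choose_eq_zero_of_lt (show j < s by omega)]

theorem sum_choose_mul_choose_s2 (n a s : ℕ) (ha : a < n) :
    ∑ j ∈ Finset.range n, (a.choose j : ℝ) * (j.choose s : ℝ) =
      (a.choose s : ℝ) * (2 ^ a * (1 / 2) ^ s) := by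
  rw [Finset.eventually_constant_sum (N := a + 1) _ (by omega)]
  · rcases lt_or_ge a s with h | h
    · rw [Nat.choose_eq_zero_of_lt h, Nat.cast_zero, zero_mul]
      refine Finset.sum_eq_zero fun j hj => ?_
      have : j < s := by have := Finset.mem_range.1 hj; omega
      simp [Nat.choose_eq_zero_of_lt this]
    · rw [show a + 1 = s + (a - s + 1) by omega, Finset.sum_range_add,
        Finset.sum_eq_zero, zero_add]
      · have h2 : (2 : ℝ) ^ a * (1 / 2) ^ s = 2 ^ (a - s) := by
          obtain ⟨d, rfl⟩ := Nat.exists_eq_add_of_le h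
          rw [Nat.add_sub_cancel_left, pow_add, mul_right_comm, ← mul_pow]
          norm_num
        have h3 := Nat.sum_range_choose (a - s)
        rw [h2, show (2 : ℝ) ^ (a - s) = ((2 ^ (a - s) : ℕ) : ℝ) by push_cast; rfl, ← h3,
          Nat.cast_sum, Finset.mul_sum]
        refine Finset.sum_congr rfl fun j _ => ?_
        have := Nat.choose_mul (n := a) (k := s + j) (s := s) (by omega)
        rw [Nat.add_sub_cancel_left] at this
        exact_mod_cast this
      · intro j hj
        simp [Nat.choose_eq_zero_of_lt (Finset.mem_range.1 hj)]
  · intro j hj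
    simp [Nat.choose_eq_zero_of_lt (show a < j by omega)]

open PowerSeries in
/-- `2^m B_m(1/2) = (2 - 2^m) B_m`. With `B(z) = z / (e^z - 1)` this is the coefficient form of
`B(2z) e^z = 2 B(z) - B(2z)`. -/
theorem sum_two_pow_bernoulli (m : ℕ) :
    ∑ k ∈ Finset.range (m + 1), (2 : ℚ) ^ k * bernoulli k * (m.choose k : ℚ) =
      (2 - 2 ^ m) * bernoulli m := by
  have hB := bernoulliPowerSeries_mul_exp_sub_one ℚ
  have hB2 := congrArg (rescale (2 : ℚ)) hB
  have hE := exp_pow_eq_rescale_exp (A := ℚ) 2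
  rw [map_mul, map_sub, map_one, rescale_X, ← Nat.cast_two (R := ℚ), ← hE, Nat.cast_two] at hB2
  have hne : exp ℚ - 1 ≠ 0 := by
    intro h
    rw [h, mul_zero] at hB
    exact X_ne_zero hB.symm
  have key : rescale (2 : ℚ) (bernoulliPowerSeries ℚ) * exp ℚ =
      C (2 : ℚ) * bernoulliPowerSeries ℚ - rescale (2 : ℚ) (bernoulliPowerSeries ℚ) := by
    apply mul_right_cancel₀ hne
    linear_combination hB2 - C (2 : ℚ) * hB
  have hc := congrArg (coeff m) key
  rw [coeff_mul, Finset.Nat.sum_antidiagonal_eq_sum_range_succ_mk, map_sub, coeff_C_mul,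
    coeff_rescale] at hc
  simp only [coeff_rescale, bernoulliPowerSeries, coeff_mk, coeff_exp, Algebra.algebraMap_self,
    RingHom.id_apply] at hc
  have hm : (m.factorial : ℚ) ≠ 0 := by exact_mod_cast m.factorial_ne_zero
  have : (2 - 2 ^ m) * bernoulli m = m.factorial * (2 * (bernoulli m / m.factorial) -
      2 ^ m * (bernoulli m / m.factorial)) := by field_simp
  rw [this, ← hc, Finset.mul_sum]
  refine Finset.sum_congr rfl fun k hk => ?_
  rw [Nat.cast_choose ℚ (show k ≤ m by have := Finset.mem_range.1 hk; omega)]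
  field_simp

/-- The factorials in `w_t` turn the sum over `t` into a binomial transform of `2^k B_k`, with
`k = i - t`: the factor in front of the second bracket does not depend on `t`. -/
theorem factorial_mul_wCoeff (n i s t : ℕ) (hi : i ≤ n - 1) (hn : 2 ≤ n) (hs : s ≤ t) (ht : t ≤ i) :
    ((n - 1 - s).choose (t - s) : ℝ) * (t.factorial * wCoeff n i t) =
      (s.factorial * (i.choose s : ℝ) * (n - s - 1).factorial / (n - i - 1).factorial) *
      (2 ^ (i - t) * ((bernoulli (i - t) : ℚ) : ℝ) * ((i - s).choose (i - t) : ℝ)) := by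
  unfold wCoeff
  rw [Nat.cast_choose ℝ (show t - s ≤ n - 1 - s by omega), Nat.cast_choose ℝ ht,
    Nat.cast_choose ℝ (hs.trans ht), Nat.cast_choose ℝ (show i - t ≤ i - s by omega),
    show n - 1 - s - (t - s) = n - t - 1 by omega, show n - 1 - s = n - s - 1 by omega,
    show i - s - (i - t) = t - s by omega]
  field_simp

/-- Comparison of the coefficients of `binom(a, s)` in the eigenvector equation. -/
theorem coeff_identity (n i s : ℕ) (hn : 2 ≤ n) (hi : i ≤ n - 1) (hie : Even i) (hs : s ≤ i) :
    (1 / 2 : ℝ) * (1 / 2) ^ s * (s.factorial * wCoeff n i s + ∑ t ∈ Finset.range (i + 1),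
      (t.factorial * wCoeff n i t) *
        ((-1) ^ s * if s ≤ t then ((n - 1 - s).choose (t - s) : ℝ) else 0)) =
      (1 / 2) ^ i * (s.factorial * wCoeff n i s) := by
  set K : ℝ := s.factorial * (i.choose s : ℝ) * (n - s - 1).factorial / (n - i - 1).factorial
    with hK
  have hw : s.factorial * wCoeff n i s = K * (2 ^ (i - s) * ((bernoulli (i - s) : ℚ) : ℝ)) := by
    have := factorial_mul_wCoeff n i s s hi hn le_rfl hs
    simpa using this
  have hsum : ∑ t ∈ Finset.range (i + 1), (t.factorial * wCoeff n i t) *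
        ((-1) ^ s * if s ≤ t then ((n - 1 - s).choose (t - s) : ℝ) else 0) =
      (-1) ^ s * (K * ((2 - 2 ^ (i - s)) * ((bernoulli (i - s) : ℚ) : ℝ))) := by
    have hb := congrArg (fun q : ℚ => (q : ℝ)) (sum_two_pow_bernoulli (i - s))
    push_cast at hb
    rw [← hb, ← Finset.eventually_constant_sum (n := i + 1) (N := i - s + 1) _ (by omega),
      ← Finset.sum_range_reflect, Finset.mul_sum, Finset.mul_sum]
    · refine Finset.sum_congr rfl fun k hk => ?_
      have hk' : k ≤ i := by have := Finset.mem_range.1 hk; omega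
      rw [Nat.add_sub_cancel]
      by_cases hsk : s ≤ i - k
      · have := factorial_mul_wCoeff n i s (i - k) hi hn hsk (by omega)
        rw [← hK, show i - (i - k) = k by omega] at this
        rw [if_pos hsk]
        linear_combination (-1) ^ s * this
      · rw [if_neg hsk, Nat.choose_eq_zero_of_lt (show i - s < k by omega)]
        simp
    · intro k hk
      simp [Nat.choose_eq_zero_of_lt (show i - s < k by omega)]
  rw [hsum, hw]
  obtain ⟨m, rfl⟩ := Nat.exists_eq_add_of_le hs
  rw [Nat.add_sub_cancel_left, pow_add]
  have h2 : (1 / 2 : ℝ) ^ m * 2 ^ m = 1 := by rw [← mul_pow]; norm_num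
  have hB : (2 ^ m + (-1) ^ s * (2 - 2 ^ m)) * ((bernoulli m : ℚ) : ℝ) =
      2 * ((bernoulli m : ℚ) : ℝ) := by
    rcases Nat.even_or_odd m with hm | hm
    · have : Even s := by rw [Nat.even_add] at hie; exact hie.2 hm
      rw [this.neg_one_pow]; ring
    · rcases eq_or_ne m 1 with rfl | h1
      · norm_num
      · rw [bernoulli_eq_zero_of_odd hm (by have := hm.pos; omega)]; simp
  linear_combination (1 / 2 * (1 / 2) ^ s * K) * hB - (1 / 2) ^ s * K * (bernoulli m : ℝ) * h2

theorem zetaVec_eq (n i : ℕ) (k : Fin n) : zetaVec n i k =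
    ∑ t ∈ Finset.range (i + 1), (t.factorial * wCoeff n i t) * (k.val.choose t : ℝ) := by
  unfold zetaVec
  refine Finset.sum_congr rfl fun t _ => ?_
  rw [Nat.descFactorial_eq_factorial_mul_choose]
  push_cast
  ring

theorem shelfM_mulVec_zetaVec (n : ℕ) (hn : 2 ≤ n) (i : ℕ) (hi : i ≤ n - 1) (hie : Even i)
    (a : Fin n) : (shelfM n).mulVec (zetaVec n i) a = (1/2 : ℝ)^i * zetaVec n i a := by
  set c : ℕ → ℝ := fun t => t.factorial * wCoeff n i t with hc
  set f : ℕ → ℝ := fun k => ∑ t ∈ Finset.range (i + 1), c t * (k.choose t : ℝ) with hf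
  have hz : ∀ k : Fin n, zetaVec n i k = f k.val := zetaVec_eq n i
  set D : ℕ → ℕ → ℝ := fun s t =>
    (-1) ^ s * if s ≤ t then ((n - 1 - s).choose (t - s) : ℝ) else 0 with hD
  have hM : (shelfM n).mulVec (zetaVec n i) a = (1 / 2 : ℝ) ^ (a.val + 1) *
      ∑ j ∈ Finset.range n, (a.val.choose j : ℝ) * (f j + f (n - 1 - j)) := by
    simp only [Matrix.mulVec, dotProduct, shelfM, hz]
    rw [Fin.sum_univ_eq_sum_range (fun j => (1 / 2 : ℝ) ^ (a.val + 1) *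
      ((a.val.choose j : ℝ) + (a.val.choose (n - 1 - j) : ℝ)) * f j) n]
    simp only [mul_assoc, add_mul, mul_add, Finset.sum_add_distrib, ← Finset.mul_sum]
    congr 2
    rw [← Finset.sum_range_reflect]
    refine Finset.sum_congr rfl fun j hj => ?_
    rw [show n - 1 - (n - 1 - j) = j by have := Finset.mem_range.1 hj; omega]
  have hrefl : ∀ j ∈ Finset.range n, f j + f (n - 1 - j) = ∑ s ∈ Finset.range (i + 1),
      (c s + ∑ t ∈ Finset.range (i + 1), c t * D s t) * (j.choose s : ℝ) := by
    intro j hj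
    have hj' : j ≤ n - 1 := by have := Finset.mem_range.1 hj; omega
    simp only [add_mul, Finset.sum_add_distrib, hf, add_right_inj, Finset.sum_mul]
    rw [Finset.sum_comm]
    refine Finset.sum_congr rfl fun t ht => ?_
    rw [choose_sub_expand (n - 1) j t i hj' (by have := Finset.mem_range.1 ht; omega),
      Finset.mul_sum]
    refine Finset.sum_congr rfl fun s _ => ?_
    simp only [hD]
    ring
  rw [hM, hz, Finset.sum_congr rfl fun j hj => by rw [hrefl j hj]]
  simp only [Finset.mul_sum, hf]
  rw [Finset.sum_comm]
  refine Finset.sum_congr rfl fun s hs => ?_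
  have hco := coeff_identity n i s hn hi hie (by have := Finset.mem_range.1 hs; omega)
  have hch := sum_choose_mul_choose_s2 n a s a.isLt
  have h2 : (1 / 2 : ℝ) ^ a.val * 2 ^ a.val = 1 := by rw [← mul_pow]; norm_num
  set G : ℝ := c s + ∑ t ∈ Finset.range (i + 1), c t * D s t with hG
  change 1 / 2 * (1 / 2) ^ s * G = (1 / 2) ^ i * c s at hco
  calc _ = (1 / 2 : ℝ) ^ (a.val + 1) * G *
        ∑ j ∈ Finset.range n, (a.val.choose j : ℝ) * (j.choose s : ℝ) := by
        rw [Finset.mul_sum]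
        exact Finset.sum_congr rfl fun j _ => by ring
    _ = _ := by
        rw [hch, pow_succ]
        linear_combination (a.val.choose s : ℝ) * hco +
          (1 / 2 * (1 / 2) ^ s * G * (a.val.choose s : ℝ)) * h2

theorem zetaVec_ne_zero (n : ℕ) (hn : 2 ≤ n) (i : ℕ) (hi : i ≤ n - 1) : zetaVec n i ≠ 0 := by
  intro h0
  -- Evaluating at position `t` isolates `c_t` once all earlier coefficients vanish.
  have hall : ∀ t, t ≤ i → wCoeff n i t = 0 := by
    intro t
    induction t using Nat.strong_induction_on with
    | _ t ih =>
      intro ht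
      have h := congrFun h0 ⟨t, by omega⟩
      rw [zetaVec_eq, Finset.sum_eq_single t] at h
      · simpa [Nat.factorial_ne_zero] using h
      · intro u hu hut
        rcases lt_or_gt_of_ne hut with h1 | h1
        · simp [ih u h1 (by omega)]
        · simp [Nat.choose_eq_zero_of_lt h1]
      · intro hnot
        exact absurd (Finset.mem_range.2 (by omega)) hnot
  have := hall i le_rfl
  simp [wCoeff, Nat.factorial_ne_zero] at this

theorem zeta_is_eigenvector (n : ℕ) (hn : 2 ≤ n) (i : ℕ) (hi : i ≤ n - 1) (hie : Even i) :
    (shelfM n).mulVec (zetaVec n i) = ((1/2 : ℝ)^i) • zetaVec n i ∧ zetaVec n i ≠ 0 := by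
  refine ⟨?_, zetaVec_ne_zero n hn i hi⟩
  ext a
  rw [shelfM_mulVec_zetaVec n hn i hi hie a, Pi.smul_apply, smul_eq_mul]
end

section
/- Let n ≥ 2 and let L be the n×n matrix with entries L(i,j) = 2^{−i} binom(i−1, j−1) for 1 ≤ i,j ≤ n. For each 0 ≤ j ≤ n−1, the vector v^{(j)} ∈ ℝ^n with coordinates v^{(j)}(k) = (k−1)^{\underline{j}} (1 ≤ k ≤ n) is an eigenvector of L with eigenvalue 2^{−j−1}, i.e., L v^{(j)} = 2^{−j−1} v^{(j)}. -/
/-!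
Row `m` (counted from `0`) of the claim is `2^{-(m+1)} ∑ₖ C(m,k) k^{\underline j} =
2^{-(j+1)} m^{\underline j}`. It comes from the binomial moment identity
`∑_{k ≤ m} C(m,k) k^{\underline j} = 2^{m-j} m^{\underline j}`, proved in
`two_pow_mul_sum_choose_mul_descFactorial` by absorption, `(k+1) C(m+1,k+1) = (m+1) C(m,k)`, which
lowers `m` and `j` together until `∑ₖ C(m,k) = 2^m` is reached.
-/

open Matrix BigOperators

/-- The lower triangular matrix `L(i,j) = 2^{-(i+1)} C(i,j)` (0-indexed). -/
noncomputable def Lmat (n : ℕ) : Matrix (Fin n) (Fin n) ℝ :=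
  fun i j => (1/2 : ℝ)^(i.val + 1) * (Nat.choose i.val j.val : ℝ)

/-- The falling-factorial vector `v^{(j)}(k) = (k-1)^{\underline j}` (0-indexed coordinates). -/
def vVec (n j : ℕ) : Fin n → ℝ := fun k => (Nat.descFactorial k.val j : ℝ)

/-- The binomial moment identity, multiplied by `2^j` so that no subtraction `m - j` occurs; it
then holds for `j > m` too, where both sides vanish. -/
theorem two_pow_mul_sum_choose_mul_descFactorial (j m : ℕ) :
    2 ^ j * ∑ k ∈ Finset.range (m + 1), m.choose k * k.descFactorial j
      = 2 ^ m * m.descFactorial j := by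
  induction j generalizing m with
  | zero => simp [Nat.sum_range_choose]
  | succ j ih =>
    cases m with
    | zero => simp
    | succ m =>
      have absorb : ∀ k, (m + 1).choose (k + 1) * (k + 1).descFactorial (j + 1)
          = (m + 1) * (m.choose k * k.descFactorial j) := by
        intro k
        rw [Nat.succ_descFactorial_succ, ← mul_assoc, ← Nat.add_one_mul_choose_eq, mul_assoc]
      rw [Finset.sum_range_succ', Nat.zero_descFactorial_succ, mul_zero, add_zero,
        Finset.sum_congr rfl fun k _ => absorb k, ← Finset.mul_sum, Nat.succ_descFactorial_succ]
      linear_combination 2 * (m + 1) * ih m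

theorem v_is_eigenvector_of_L (n : ℕ) (hn : 2 ≤ n) (j : ℕ) (hj : j ≤ n - 1) :
    (Lmat n).mulVec (vVec n j) = ((1/2 : ℝ)^(j + 1)) • vVec n j := by
  ext i
  obtain ⟨m, hm⟩ := i
  -- The terms with `m < k < n` vanish, so the row sum may stop at `k = m`.
  have trunc : ∑ k ∈ Finset.range n, m.choose k * k.descFactorial j
      = ∑ k ∈ Finset.range (m + 1), m.choose k * k.descFactorial j := by
    symm
    apply Finset.sum_subset (Finset.range_subset_range.2 hm)
    intro k _ hk
    rw [Nat.choose_eq_zero_of_lt (by simpa using hk), zero_mul]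
  have key : (2 : ℝ) ^ j * ∑ k ∈ Finset.range n, (m.choose k : ℝ) * (k.descFactorial j : ℝ)
      = 2 ^ m * (m.descFactorial j : ℝ) := by
    have h := two_pow_mul_sum_choose_mul_descFactorial j m
    rw [← trunc] at h
    exact_mod_cast h
  simp only [Matrix.mulVec, dotProduct, Lmat, vVec, Pi.smul_apply, smul_eq_mul, mul_assoc]
  rw [← Finset.mul_sum,
    Fin.sum_univ_eq_sum_range (fun k => (m.choose k : ℝ) * (k.descFactorial j : ℝ)) n]
  rw [one_div, inv_pow, inv_pow, pow_succ, pow_succ]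
  field_simp
  linear_combination key
end

section
/- Let n ≥ 2, let P be the n×n permutation matrix with P(i,j) = 1 if j = n−i+1 and 0 otherwise, and for 0 ≤ j ≤ n−1 let v^{(j)} ∈ ℝ^n be the vector with coordinates v^{(j)}(k) = (k−1)^{\underline{j}} (1 ≤ k ≤ n). Then for every 0 ≤ j ≤ n−1, P v^{(j)} = (−1)^j v^{(j)} + Σ_{k=0}^{j−1} c_{n−1}(k,j) v^{(k)}, where c_N(k,m) = (−1)^k binom(m,k) (N−k)^{\underline{m−k}}. -/
/-!
Row `i` of `Pmat n` picks out the entry with index `n - 1 - i`, so with `N = n - 1` and `x = i` the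
claim is the expansion of the reflected falling factorial `(N - x)^{\underline j}` in the falling
factorials of `x`. Writing every falling factorial as a factorial times a binomial coefficient and
cancelling `j!`, it becomes
`C(N - x, j) = ∑_{k ≤ j} (-1)^k C(x, k) C(N - k, j - k)`, the inclusion–exclusion count of the
`j`-subsets of an `N`-set that avoid a fixed `x`-subset (`choose_sub_eq_sum`). That identity follows
by induction on `x` from Pascal's rule applied to both sides. The term `k = j` is `(-1)^j x^{\underline j}`,
the diagonal part; the others give the strictly upper triangular part.
-/

open Matrix BigOperators

/-- The reversal permutation matrix: `P(i,j) = 1` iff `j = n-1-i` (0-indexed). -/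
def Pmat (n : ℕ) : Matrix (Fin n) (Fin n) ℝ :=
  fun i j => if j.val = n - 1 - i.val then 1 else 0

/-- `c_N(k,m) = (-1)^k C(m,k) (N-k)^{\underline{m-k}}`. -/
def cCoeff (N k m : ℕ) : ℝ :=
  (-1 : ℝ)^k * (Nat.choose m k : ℝ) * (Nat.descFactorial (N - k) (m - k) : ℝ)

/-- Inclusion–exclusion for the `j`-subsets of an `N`-set that avoid a given `x`-subset. Both sides
satisfy `f (N+1) (j+1) (x+1) = f (N+1) (j+1) x - f N j x`. -/
theorem choose_sub_eq_sum (x : ℕ) : ∀ N j : ℕ, x ≤ N →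
    ((N - x).choose j : ℝ) =
      ∑ k ∈ Finset.range (j + 1), (-1 : ℝ) ^ k * (x.choose k : ℝ) * ((N - k).choose (j - k) : ℝ) := by
  induction x with
  | zero =>
    intro N j _
    rw [Finset.sum_range_succ']
    simp
  | succ x ih =>
    intro N j h
    obtain ⟨N, rfl⟩ : ∃ M, N = M + 1 := ⟨N - 1, by omega⟩
    rcases j with _ | j
    · simp
    · have h1 := ih (N + 1) (j + 1) (by omega)
      have h2 := ih N j (by omega)
      rw [Finset.sum_range_succ'] at h1 ⊢
      have e : N + 1 - x = (N - x) + 1 := by omega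
      rw [e, Nat.choose_succ_succ] at h1
      simp only [Nat.add_sub_add_right, Nat.choose_succ_succ x] at h1 ⊢
      have h3 : ∑ k ∈ Finset.range (j + 1), (-1 : ℝ) ^ (k + 1) *
            ((x.choose k + x.choose (k + 1) : ℕ) : ℝ) * ((N - k).choose (j - k) : ℝ) =
          ∑ k ∈ Finset.range (j + 1), (-1 : ℝ) ^ (k + 1) * (x.choose (k + 1) : ℝ) *
            ((N - k).choose (j - k) : ℝ) -
          ∑ k ∈ Finset.range (j + 1), (-1 : ℝ) ^ k * (x.choose k : ℝ) *
            ((N - k).choose (j - k) : ℝ) := by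
        rw [← Finset.sum_sub_distrib]
        refine Finset.sum_congr rfl fun k _ => ?_
        push_cast
        ring
      rw [h3, ← h2]
      push_cast [Nat.succ_eq_add_one] at h1
      simp only [Nat.sub_zero, Nat.choose_zero_right] at h1 ⊢
      linarith

theorem descFactorial_sub_eq_sum (x N j : ℕ) (h : x ≤ N) :
    ((N - x).descFactorial j : ℝ) =
      ∑ k ∈ Finset.range (j + 1), cCoeff N k j * (x.descFactorial k : ℝ) := by
  rw [Nat.descFactorial_eq_factorial_mul_choose, Nat.cast_mul, choose_sub_eq_sum x N j h,
    Finset.mul_sum]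
  refine Finset.sum_congr rfl fun k hk => ?_
  have hkj : k ≤ j := by simpa [Nat.lt_succ_iff] using hk
  have hf : (j.choose k : ℝ) * (k.factorial : ℝ) * ((j - k).factorial : ℝ) = (j.factorial : ℝ) := by
    exact_mod_cast Nat.choose_mul_factorial_mul_factorial hkj
  simp only [cCoeff, Nat.descFactorial_eq_factorial_mul_choose, Nat.cast_mul, ← hf]
  ring

theorem P_upper_triangular_in_falling_basis (n : ℕ) (hn : 2 ≤ n) (j : ℕ) (hj : j ≤ n - 1) :
    (Pmat n).mulVec (vVec n j) =
      ((-1 : ℝ)^j) • vVec n j + ∑ k ∈ Finset.range j, cCoeff (n - 1) k j • vVec n k := by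
  ext i
  have hi : i.val ≤ n - 1 := by omega
  have hL : (Pmat n).mulVec (vVec n j) i = ((n - 1 - i.val).descFactorial j : ℝ) := by
    rw [Matrix.mulVec, dotProduct, Finset.sum_eq_single (⟨n - 1 - i.val, by omega⟩ : Fin n)]
    · simp [Pmat, vVec]
    · intro b _ hb
      have hb' : b.val ≠ n - 1 - i.val := fun h => hb (Fin.ext h)
      simp [Pmat, hb']
    · simp
  rw [hL, descFactorial_sub_eq_sum _ _ _ hi, Finset.sum_range_succ, add_comm]
  simp [vVec, cCoeff, Finset.sum_apply]
end

section
/- For every nonnegative integer n, Σ_{k=0}^{n} binom(n,k) B_k 2^k = (2 − 2^n) B_n, where B_k denotes the k-th Bernoulli number. -/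
/-!
The left-hand side is `2 ^ n * Bₙ(1/2)`, where `Bₙ(x) = ∑ binom(n,k) Bₖ x ^ (n - k)` is the Bernoulli
polynomial. The duplication formula `Bₙ(2x) = 2 ^ (n - 1) * (Bₙ(x) + Bₙ(x + 1/2))` at `x = 0` gives
`Bₙ(1/2) = (2 / 2 ^ n - 1) * Bₙ`, which is `bernoulliFun_eval_half` in Mathlib; multiplying by
`2 ^ n` yields the identity. As `bernoulliFun` is real-valued, the computation is done in `ℝ`.
-/

open BigOperators

theorem bernoulli_two_identity (n : ℕ) :
    ∑ k ∈ Finset.range (n + 1), (Nat.choose n k : ℚ) * bernoulli k * 2^k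
      = (2 - 2^n) * bernoulli n := by
  have h := bernoulliFun_eval_half n
  have hsum : bernoulliFun n 2⁻¹
      = ∑ k ∈ Finset.range (n + 1), (2⁻¹ : ℝ) ^ (n - k) * (bernoulli k * n.choose k) := by
    simp only [bernoulliFun, Polynomial.bernoulli, Polynomial.map_sum, Polynomial.eval_finsetSum,
      Polynomial.map_monomial, Polynomial.eval_monomial]
    refine Finset.sum_congr rfl fun k _ => ?_
    simp [mul_comm]
  have hreal : ∑ k ∈ Finset.range (n + 1), (n.choose k : ℝ) * bernoulli k * 2 ^ k
      = (2 - 2 ^ n) * bernoulli n := by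
    calc ∑ k ∈ Finset.range (n + 1), (n.choose k : ℝ) * bernoulli k * 2 ^ k
        = 2 ^ n * bernoulliFun n 2⁻¹ := by
          rw [hsum, Finset.mul_sum]
          refine Finset.sum_congr rfl fun k hk => ?_
          have hkn : k ≤ n := Nat.lt_succ_iff.mp (Finset.mem_range.mp hk)
          have hpow : (2 : ℝ) ^ n * 2⁻¹ ^ (n - k) = 2 ^ k := by
            nth_rewrite 1 [← Nat.add_sub_of_le hkn]
            rw [pow_add, mul_assoc, ← mul_pow]
            norm_num
          rw [← hpow]
          ring
      _ = (2 - 2 ^ n) * bernoulli n := by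
          rw [h]
          field_simp
  exact_mod_cast hreal
end

section
/- For every integer i ≥ 2, the quantity A_i := 1 + i + Σ_{s=2}^{i} 2^{s} |B_s| binom(i,s) satisfies A_i ≤ 4 · i!, where B_s denotes the s-th Bernoulli number. -/
/-!
By Euler's formula `ζ(2k) = 2^(2k-1) π^(2k) |B_{2k}| / (2k)!` and `ζ(2k) ≤ ζ(2) = π²/6`, every
`s ≥ 2` satisfies `2^s |B_s| ≤ s!/3` (odd `s` contribute nothing). Hence the `s`-th summand is at
most `i! / (3 (i-s)!)`, so the sum is at most `(e/3) i! ≤ i!`, while `1 + i ≤ 3 · i!`.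
-/

open BigOperators

/-- Comparison of `ζ(2k)` with `ζ(2)`, read through Euler's formula. -/
lemma two_pow_mul_abs_bernoulli_even_le (k : ℕ) (hk : k ≠ 0) :
    (2 : ℝ) ^ (2 * k) * |((bernoulli (2 * k) : ℚ) : ℝ)| ≤ ((2 * k).factorial : ℝ) / 3 := by
  have h := hasSum_zeta_nat hk
  have hle := hasSum_le (fun n : ℕ => by
    show (1 : ℝ) / (n : ℝ) ^ (2 * k) ≤ 1 / (n : ℝ) ^ 2
    rcases Nat.eq_zero_or_pos n with rfl | hn
    · simp [hk]
    · have h1 : (1 : ℝ) ≤ n := by exact_mod_cast hn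
      have h2 : (n : ℝ) ^ 2 ≤ (n : ℝ) ^ (2 * k) := pow_le_pow_right₀ h1 (by omega)
      exact one_div_le_one_div_of_le (by positivity) h2) h hasSum_zeta_two
  have hnn := h.nonneg (fun n : ℕ => by positivity)
  rw [← abs_of_nonneg hnn] at hle
  simp only [abs_mul, abs_div, abs_pow, abs_neg, abs_one, one_pow, one_mul, Nat.abs_cast,
    abs_two, abs_of_pos Real.pi_pos] at hle
  have hf : (0 : ℝ) < ((2 * k).factorial : ℝ) := by positivity
  rw [div_le_iff₀ hf] at hle
  have hpi : Real.pi ^ 2 ≤ Real.pi ^ (2 * k) :=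
    pow_le_pow_right₀ (by linarith [Real.pi_gt_three]) (by omega)
  have h2 : (2 : ℝ) ^ (2 * k) = 2 * 2 ^ (2 * k - 1) := by
    rw [← pow_succ']
    congr 1
    omega
  set b := |((bernoulli (2 * k) : ℚ) : ℝ)|
  have hb : 0 ≤ (2 : ℝ) ^ (2 * k - 1) * b := by positivity
  have hmul := mul_le_mul_of_nonneg_left hpi hb
  have hp2 : 0 < Real.pi ^ 2 := by positivity
  have hkey : (2 : ℝ) ^ (2 * k - 1) * b ≤ ((2 * k).factorial : ℝ) / 6 := by
    refine le_of_mul_le_mul_right ?_ hp2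
    linarith
  rw [h2]
  linarith

lemma two_pow_mul_abs_bernoulli_le (s : ℕ) (hs : 2 ≤ s) :
    (2 : ℝ) ^ s * |((bernoulli s : ℚ) : ℝ)| ≤ (s.factorial : ℝ) / 3 := by
  rcases Nat.even_or_odd' s with ⟨k, rfl | rfl⟩
  · exact two_pow_mul_abs_bernoulli_even_le k (by omega)
  · rw [bernoulli_eq_zero_of_odd ⟨k, rfl⟩ (by omega)]
    simp only [Rat.cast_zero, abs_zero, mul_zero]
    positivity

theorem bernoulli_sum_bound (i : ℕ) (hi : 2 ≤ i) :
    (1 : ℝ) + (i : ℝ) +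
        ∑ s ∈ Finset.Icc 2 i, (2 : ℝ)^s * |((bernoulli s : ℚ) : ℝ)| * (Nat.choose i s : ℝ)
      ≤ 4 * (Nat.factorial i : ℝ) := by
  have hterm : ∀ s ∈ Finset.Icc 2 i,
      (2 : ℝ)^s * |((bernoulli s : ℚ) : ℝ)| * (Nat.choose i s : ℝ)
        ≤ (i.factorial : ℝ) / 3 * (1 / ((i - s).factorial : ℝ)) := by
    intro s hs
    obtain ⟨h2, hsi⟩ := Finset.mem_Icc.mp hs
    have hc : (i.choose s : ℝ) * s.factorial * (i - s).factorial = i.factorial := by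
      exact_mod_cast Nat.choose_mul_factorial_mul_factorial hsi
    calc _ ≤ (s.factorial : ℝ) / 3 * (i.choose s : ℝ) :=
          mul_le_mul_of_nonneg_right (two_pow_mul_abs_bernoulli_le s h2) (by positivity)
      _ = _ := by
          rw [← hc]
          field_simp
  have hexp : ∑ s ∈ Finset.Icc 2 i, 1 / ((i - s).factorial : ℝ) ≤ 3 := by
    calc ∑ s ∈ Finset.Icc 2 i, 1 / ((i - s).factorial : ℝ)
        ≤ ∑ s ∈ Finset.range (i + 1), 1 / ((i - s).factorial : ℝ) :=
          Finset.sum_le_sum_of_subset_of_nonneg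
            (fun s hs => by simp at hs ⊢; omega) (fun _ _ _ => by positivity)
      _ = ∑ j ∈ Finset.range (i + 1), (1 : ℝ) ^ j / (j.factorial : ℝ) := by
          rw [← Finset.sum_range_reflect]
          refine Finset.sum_congr rfl fun j hj => ?_
          have hj' := Finset.mem_range.mp hj
          rw [one_pow, show i - (i + 1 - 1 - j) = j by omega]
      _ ≤ Real.exp 1 := Real.sum_le_exp_of_nonneg zero_le_one _
      _ ≤ 3 := by linarith [Real.exp_one_lt_d9]
  have hsum := Finset.sum_le_sum hterm
  rw [← Finset.mul_sum] at hsum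
  have hmul := mul_le_mul_of_nonneg_left hexp
    (show (0 : ℝ) ≤ (i.factorial : ℝ) / 3 by positivity)
  have h1 : (i : ℝ) ≤ i.factorial := by exact_mod_cast Nat.self_le_factorial i
  have h2 : (2 : ℝ) ≤ i := by exact_mod_cast hi
  linarith
end

section
/- Let n ≥ 2 and let i be an even integer with 2 ≤ i ≤ n−1. Then for all 1 ≤ k ≤ n, |ζ^{(i)}(k)| ≤ 4 · i! · n^{i}; in particular ‖ζ^{(i)}‖_∞ ≤ 4 · i! · n^{i}. Moreover, for i = 0 one has |ζ^{(0)}(k)| ≤ 1 for all 1 ≤ k ≤ n. -/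
/-!
Since `C(i,t) = i! / (t! (i-t)!)`, the `t`-th term of `ζ^{(i)}(k)` is at most
`i! / t! · (2^{i-t} |B_{i-t}| / (i-t)!) · n^{i-t} · n^t` in absolute value. The middle factor is at
most `1` (`two_pow_mul_abs_bernoulli_le`): for even index this is Euler's formula
`2^{2j} |B_{2j}| / (2j)! = 2 ζ(2j) / π^{2j}` together with `ζ(2j) ≤ ζ(2) = π² / 6`.
Summing over `t` gives `i! n^i ∑ 1 / t! ≤ e · i! n^i`, and `e < 4`.
-/

open BigOperators

/-- Euler's formula expresses `2^{2j} |B_{2j}| / (2j)!` as `2 ζ(2j) / π^{2j}`, and this is at most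
`2 (π² / 6) / π² = 1 / 3`. -/
theorem two_pow_mul_abs_bernoulli_even_le_s14 (j : ℕ) (hj : j ≠ 0) :
    (2 : ℝ) ^ (2 * j) * |((bernoulli (2 * j) : ℚ) : ℝ)| ≤ (Nat.factorial (2 * j) : ℝ) := by
  have h := hasSum_zeta_nat hj
  have hle := hasSum_le (fun m : ℕ => ?_) h hasSum_zeta_two
  swap
  · rcases Nat.eq_zero_or_pos m with rfl | hm
    · simp [hj]
    · have hm' : (1 : ℝ) ≤ m := by exact_mod_cast hm
      exact one_div_le_one_div_of_le (by positivity)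
        (pow_le_pow_right₀ hm' (by omega))
  have h0 := h.nonneg (fun m => by positivity)
  rw [← abs_of_nonneg h0] at hle
  have hf : (0 : ℝ) < (Nat.factorial (2 * j) : ℝ) := by positivity
  simp only [abs_div, abs_mul, abs_pow, abs_neg, abs_one, one_pow, one_mul,
    abs_of_pos Real.pi_pos, Nat.abs_cast, Nat.abs_ofNat] at hle
  rw [div_le_iff₀ hf] at hle
  have h2 : (2 : ℝ) ^ (2 * j) = 2 ^ (2 * j - 1) * 2 := by
    rw [← pow_succ]; congr 1; omega
  have hpi : Real.pi ^ 2 ≤ Real.pi ^ (2 * j) :=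
    pow_le_pow_right₀ (by linarith [Real.pi_gt_three]) (by omega)
  have hpos : 0 < Real.pi ^ 2 := by positivity
  set b := |((bernoulli (2 * j) : ℚ) : ℝ)|
  have hb : 0 ≤ (2 : ℝ) ^ (2 * j - 1) * b := by positivity
  rw [h2]
  have h3 := mul_le_mul_of_nonneg_left hpi hb
  have h4 : (2 : ℝ) ^ (2 * j - 1) * b * Real.pi ^ 2 ≤
      ((Nat.factorial (2 * j) : ℝ) / 6) * Real.pi ^ 2 := by linarith
  have h5 := le_of_mul_le_mul_right h4 hpos
  linarith

/-- The power series coefficients `2^m B_m / m!` of `2z / (e^{2z} - 1)` have absolute value at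
most `1`; equality holds for `m = 0` and `m = 1`. -/
theorem two_pow_mul_abs_bernoulli_le_s14 (m : ℕ) :
    (2 : ℝ) ^ m * |((bernoulli m : ℚ) : ℝ)| ≤ (Nat.factorial m : ℝ) := by
  rcases Nat.even_or_odd' m with ⟨j, rfl | rfl⟩
  · rcases eq_or_ne j 0 with rfl | hj
    · simp
    · exact two_pow_mul_abs_bernoulli_even_le_s14 j hj
  · rcases eq_or_ne j 0 with rfl | hj
    · norm_num [bernoulli_one, abs_div]
    · rw [bernoulli_eq_zero_of_odd ⟨j, rfl⟩ (by omega)]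
      simp

theorem factorial_div_factorial_le (n i t : ℕ) (hi : i ≤ n - 1) (ht : t ≤ i) :
    (Nat.factorial (n - t - 1) : ℝ) / (Nat.factorial (n - i - 1) : ℝ) ≤ (n : ℝ) ^ (i - t) := by
  rw [div_le_iff₀ (by positivity)]
  have h := Nat.factorial_mul_descFactorial (n := n - t - 1) (k := i - t) (by omega)
  have e : n - t - 1 - (i - t) = n - i - 1 := by omega
  rw [e] at h
  have h1 : (n - t - 1).descFactorial (i - t) ≤ n ^ (i - t) :=
    (Nat.descFactorial_le_pow _ _).trans (Nat.pow_le_pow_left (by omega) _)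
  rw [← h, mul_comm]
  exact_mod_cast Nat.mul_le_mul_right _ h1

theorem abs_wCoeff_mul_descFactorial_le (n i t k : ℕ) (hi : i ≤ n - 1) (ht : t ≤ i) (hk : k ≤ n) :
    |wCoeff n i t * (Nat.descFactorial k t : ℝ)| ≤
      (Nat.factorial i : ℝ) * (n : ℝ) ^ i * (1 / (Nat.factorial t : ℝ)) := by
  have hd : (Nat.descFactorial k t : ℝ) ≤ (n : ℝ) ^ t := by
    exact_mod_cast (Nat.descFactorial_le_pow k t).trans (Nat.pow_le_pow_left hk t)
  have hc : (Nat.factorial (i - t) : ℝ) * (Nat.choose i t : ℝ) =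
      (Nat.factorial i : ℝ) * (1 / (Nat.factorial t : ℝ)) := by
    rw [mul_one_div, eq_div_iff (by positivity), ← Nat.choose_mul_factorial_mul_factorial ht]
    push_cast
    ring
  rw [wCoeff, mul_div_assoc]
  simp only [abs_mul, abs_div, abs_pow, Nat.abs_cast, Nat.abs_ofNat]
  calc (2 : ℝ) ^ (i - t) * |((bernoulli (i - t) : ℚ) : ℝ)| * (Nat.choose i t : ℝ) *
        ((Nat.factorial (n - t - 1) : ℝ) / (Nat.factorial (n - i - 1) : ℝ)) *
        (Nat.descFactorial k t : ℝ)
      ≤ (Nat.factorial (i - t) : ℝ) * (Nat.choose i t : ℝ) * (n : ℝ) ^ (i - t) * (n : ℝ) ^ t := by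
        gcongr
        · exact two_pow_mul_abs_bernoulli_le_s14 _
        · exact factorial_div_factorial_le n i t hi ht
    _ = (Nat.factorial i : ℝ) * (n : ℝ) ^ i * (1 / (Nat.factorial t : ℝ)) := by
        rw [hc, mul_assoc, ← pow_add, Nat.sub_add_cancel ht]
        ring

theorem zeta_linf_bound (n : ℕ) (hn : 2 ≤ n) :
    (∀ i : ℕ, Even i → 2 ≤ i → i ≤ n - 1 →
      ∀ k : Fin n, |zetaVec n i k| ≤ 4 * (Nat.factorial i : ℝ) * (n : ℝ)^i) ∧
    (∀ k : Fin n, |zetaVec n 0 k| ≤ 1) := by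
  refine ⟨fun i _ _ hi k => ?_, fun k => ?_⟩
  · have hexp : ∑ t ∈ Finset.range (i + 1), 1 / (Nat.factorial t : ℝ) ≤ 4 := by
      have h := Real.sum_le_exp_of_nonneg (x := 1) zero_le_one (i + 1)
      simp only [one_pow] at h
      linarith [Real.exp_one_lt_d9]
    calc |zetaVec n i k|
        ≤ ∑ t ∈ Finset.range (i + 1), |wCoeff n i t * (Nat.descFactorial k.val t : ℝ)| :=
          Finset.abs_sum_le_sum_abs _ _
      _ ≤ ∑ t ∈ Finset.range (i + 1),
            (Nat.factorial i : ℝ) * (n : ℝ) ^ i * (1 / (Nat.factorial t : ℝ)) :=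
          Finset.sum_le_sum fun t ht => abs_wCoeff_mul_descFactorial_le n i t k hi
            (Nat.lt_succ_iff.mp (Finset.mem_range.mp ht)) k.isLt.le
      _ = (Nat.factorial i : ℝ) * (n : ℝ) ^ i *
            ∑ t ∈ Finset.range (i + 1), 1 / (Nat.factorial t : ℝ) := by
          rw [Finset.mul_sum]
      _ ≤ (Nat.factorial i : ℝ) * (n : ℝ) ^ i * 4 := by gcongr
      _ = 4 * (Nat.factorial i : ℝ) * (n : ℝ) ^ i := by ring
  · -- The only term is `w_0 = (n-1)! / (n-1)! = 1`.
    have h : (Nat.factorial (n - 1) : ℝ) ≠ 0 := by positivity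
    simp [zetaVec, wCoeff, div_self h]
end

section
/- There exists a universal constant C > 0 such that for every ε > 0 there is an N_ε with the following property: for every integer n ≥ N_ε, every integer k with k ≥ (1+ε) log₂ n, and the position matrix M of a single-shelf shuffle on n cards, max_{1 ≤ i,j ≤ n} |(M^k)(i,j) − 1/n| ≤ C · n^{−1−2ε}. -/
/-!
Acting on functions `f : {0, …, m} → ℝ` (with `m = n - 1`), the position matrix is
`T f i = E [(f B + f (m - B)) / 2]` with `B` binomial of parameters `(i, 1/2)`. By Pascal's rule the
forward difference `D` satisfies `D² ∘ T_{m+2} = (1/4) T_m ∘ D²` (`D_D_T`), and `T_m` is doubly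
stochastic, because its column sums are `1` (`S_add_S`); so it does not increase `ℓ¹` norms. Hence
`∑ |D² (T^k δ_j)| ≤ 4 · 4^{-k}` (`sum_D_D_iterate`).

The symmetrisation `g x = (f x + f (m - x)) / 2` has an antisymmetric difference `D g`, which is
therefore bounded by the `ℓ¹` norm of `D² f`; as `T f` is a binomial average of `g`, the difference
`D (T f)` is bounded in the same way (`abs_D_T_le`). Consequently `T^k δ_j` has
oscillation at most `4 n 4^{-k}`. Its mean is `1 / n` by double stochasticity, which gives
`|M^k (i, j) - 1 / n| ≤ 4 n 4^{-k}`, and `2^k ≥ n^{1+ε}` concludes.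
-/

open Matrix BigOperators

namespace Shelf

open Finset

/-! ### Binomial averages and differences -/

/-- Binomial average: `A f i = E f(B)` with `B` binomial of parameters `(i, 1/2)`, defined by
conditioning on one coin toss. -/
noncomputable def A (f : ℕ → ℝ) : ℕ → ℝ
  | 0 => f 0
  | i + 1 => (A f i + A (fun x => f (x + 1)) i) / 2

/-- Forward difference. -/
def D (f : ℕ → ℝ) (x : ℕ) : ℝ := f (x + 1) - f x

/-- Reflection of `{0, …, m}`; only the values at `x ≤ m` are meaningful. -/
def R (m : ℕ) (f : ℕ → ℝ) (x : ℕ) : ℝ := f (m - x)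

/-- The position matrix on `m + 1` cards, acting on functions on `{0, …, m}` (extended to `ℕ`). -/
noncomputable def T (m : ℕ) (f : ℕ → ℝ) (i : ℕ) : ℝ := (A f i + A (R m f) i) / 2

lemma A_congr {f g : ℕ → ℝ} {i : ℕ} (h : ∀ x ≤ i, f x = g x) : A f i = A g i := by
  induction i generalizing f g with
  | zero => exact h 0 le_rfl
  | succ i ih =>
    simp only [A]
    rw [ih (fun x hx => h x (by omega)),
      ih (f := fun x => f (x + 1)) (g := fun x => g (x + 1)) (fun x hx => h (x + 1) (by omega))]

lemma A_lin (a b : ℝ) (f g : ℕ → ℝ) (i : ℕ) :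
    A (fun x => a * f x + b * g x) i = a * A f i + b * A g i := by
  induction i generalizing f g with
  | zero => rfl
  | succ i ih =>
    simp only [A]
    rw [ih, ih (fun x => f (x + 1)) (fun x => g (x + 1))]
    ring

lemma D_A (f : ℕ → ℝ) : D (A f) = fun i => (1 / 2) * A (D f) i := by
  funext i
  have h := A_lin 1 (-1) (fun x => f (x + 1)) f i
  have e : D f = fun x => 1 * f (x + 1) + -1 * f x := by funext x; simp only [D]; ring
  rw [e, h]
  simp only [D, A]
  ring

lemma D_D_A (f : ℕ → ℝ) (i : ℕ) : D (D (A f)) i = (1 / 4) * A (D (D f)) i := by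
  have h := congrFun (D_A (D f)) i
  rw [D_A]
  simp only [D] at h ⊢
  linarith

lemma abs_A_le {f : ℕ → ℝ} {i : ℕ} {B : ℝ} (h : ∀ x ≤ i, |f x| ≤ B) : |A f i| ≤ B := by
  induction i generalizing f with
  | zero => exact h 0 le_rfl
  | succ i ih =>
    have h1 := ih (f := f) (fun x hx => h x (by omega))
    have h2 := ih (f := fun x => f (x + 1)) (fun x hx => h (x + 1) (by omega))
    simp only [A]
    rw [abs_le] at *
    constructor <;> linarith [h1.1, h1.2, h2.1, h2.2]

lemma A_eq_sum (f : ℕ → ℝ) (i m : ℕ) (h : i ≤ m) :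
    A f i = ∑ x ∈ range (m + 1), (1 / 2 : ℝ) ^ i * (i.choose x : ℝ) * f x := by
  induction i generalizing f m with
  | zero =>
    rw [Finset.sum_range_succ']
    simp [A]
  | succ i ih =>
    obtain ⟨m, rfl⟩ : ∃ m', m = m' + 1 := ⟨m - 1, by omega⟩
    simp only [A]
    rw [ih f (m + 1) (by omega), ih (fun x => f (x + 1)) m (by omega),
      Finset.sum_range_succ', Finset.sum_range_succ' (n := m + 1)]
    simp only [Nat.choose_succ_succ, Nat.choose_zero_right, Nat.cast_add, mul_add, add_mul,
      Finset.sum_add_distrib, pow_succ]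
    have e1 : ∑ x ∈ range (m + 1), (1 / 2 : ℝ) ^ i * (1 / 2) * (i.choose x : ℝ) * f (x + 1)
        = (∑ x ∈ range (m + 1), (1 / 2 : ℝ) ^ i * (i.choose x : ℝ) * f (x + 1)) / 2 := by
      rw [Finset.sum_div]; exact Finset.sum_congr rfl fun x _ => by ring
    have e2 : ∑ x ∈ range (m + 1),
          (1 / 2 : ℝ) ^ i * (1 / 2) * (i.choose (x + 1) : ℝ) * f (x + 1)
        = (∑ x ∈ range (m + 1), (1 / 2 : ℝ) ^ i * (i.choose (x + 1) : ℝ) * f (x + 1)) / 2 := by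
      rw [Finset.sum_div]; exact Finset.sum_congr rfl fun x _ => by ring
    simp only [Nat.succ_eq_add_one] at *
    rw [e1, e2]
    ring

/-! ### Double stochasticity -/

/-- The entries of the position matrix on `m + 1` cards. -/
noncomputable def P (m i x : ℕ) : ℝ :=
  (1 / 2 : ℝ) ^ (i + 1) * ((i.choose x : ℝ) + (i.choose (m - x) : ℝ))

lemma P_nonneg (m i x : ℕ) : 0 ≤ P m i x := by
  unfold P; positivity

lemma T_eq_sum (m : ℕ) (f : ℕ → ℝ) (i : ℕ) (h : i ≤ m) :
    T m f i = ∑ x ∈ range (m + 1), P m i x * f x := by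
  unfold T
  rw [A_eq_sum f i m h, A_eq_sum (R m f) i m h,
    ← Finset.sum_range_reflect (fun x => (1 / 2 : ℝ) ^ i * (i.choose x : ℝ) * R m f x),
    ← Finset.sum_add_distrib, Finset.sum_div]
  refine Finset.sum_congr rfl fun x hx => ?_
  have hx' : x ≤ m := by simpa [Nat.lt_succ_iff] using hx
  have e1 : m + 1 - 1 - x = m - x := by omega
  have e2 : m - (m - x) = x := by omega
  simp only [R, P, e1, e2]
  ring

/-- One half of the column sum of the position matrix. -/
noncomputable def S (m x : ℕ) : ℝ := ∑ i ∈ range (m + 1), (1 / 2 : ℝ) ^ (i + 1) * (i.choose x : ℝ)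

lemma S_succ (m x : ℕ) : S (m + 1) (x + 1) = (S m x + S m (x + 1)) / 2 := by
  unfold S
  rw [Finset.sum_range_succ', ← Finset.sum_add_distrib, Finset.sum_div]
  simp only [Nat.choose_zero_succ, Nat.cast_zero, mul_zero, add_zero]
  refine Finset.sum_congr rfl fun i _ => ?_
  rw [Nat.choose_succ_succ]
  push_cast
  ring

lemma S_zero_add (m : ℕ) : S m 0 + S m m = 1 := by
  have h0 : S m 0 = 1 - (1 / 2 : ℝ) ^ (m + 1) := by
    unfold S
    induction m with
    | zero => norm_num
    | succ m ih => rw [Finset.sum_range_succ, ih]; simp; ring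
  have h1 : S m m = (1 / 2 : ℝ) ^ (m + 1) := by
    unfold S
    rw [Finset.sum_range_succ, Finset.sum_eq_zero]
    · simp
    · intro i hi
      rw [Nat.choose_eq_zero_of_lt (by simpa using hi)]
      simp
  rw [h0, h1]; ring

/-- The column sums of the position matrix equal `1`. -/
lemma S_add_S (m x y : ℕ) (h : x + y = m) : S m x + S m y = 1 := by
  induction m generalizing x y with
  | zero =>
    obtain ⟨rfl, rfl⟩ : x = 0 ∧ y = 0 := by omega
    exact S_zero_add 0
  | succ m ih =>
    rcases x with _ | x
    · obtain rfl : y = m + 1 := by omega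
      exact S_zero_add _
    rcases y with _ | y
    · obtain rfl : x = m := by omega
      rw [add_comm]; exact S_zero_add _
    · rw [S_succ, S_succ]
      have h1 := ih x (y + 1) (by omega)
      have h2 := ih (x + 1) y (by omega)
      linarith

lemma sum_P (m x : ℕ) (h : x ≤ m) : ∑ i ∈ range (m + 1), P m i x = 1 := by
  rw [← S_add_S m x (m - x) (by omega)]
  simp only [P, S, mul_add, Finset.sum_add_distrib]

lemma sum_T (m : ℕ) (f : ℕ → ℝ) :
    ∑ i ∈ range (m + 1), T m f i = ∑ x ∈ range (m + 1), f x := by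
  rw [Finset.sum_congr rfl fun i hi => T_eq_sum m f i (by simpa [Nat.lt_succ_iff] using hi),
    Finset.sum_comm]
  refine Finset.sum_congr rfl fun x hx => ?_
  rw [← Finset.sum_mul, sum_P m x (by simpa [Nat.lt_succ_iff] using hx), one_mul]

lemma sum_abs_T_le (m : ℕ) (f : ℕ → ℝ) :
    ∑ i ∈ range (m + 1), |T m f i| ≤ ∑ x ∈ range (m + 1), |f x| := by
  rw [← sum_T m fun x => |f x|]
  refine Finset.sum_le_sum fun i hi => ?_
  have hi' : i ≤ m := by simpa [Nat.lt_succ_iff] using hi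
  rw [T_eq_sum m f i hi', T_eq_sum m _ i hi']
  refine (Finset.abs_sum_le_sum_abs _ _).trans (le_of_eq ?_)
  exact Finset.sum_congr rfl fun x _ => by rw [abs_mul, abs_of_nonneg (P_nonneg m i x)]

/-! ### Contraction of second differences -/

/-- Second differences intertwine the position matrices on `m + 3` and `m + 1` cards. -/
lemma D_D_T (m : ℕ) (f : ℕ → ℝ) (i : ℕ) (h : i ≤ m) :
    D (D (T (m + 2) f)) i = (1 / 4) * T m (D (D f)) i := by
  have h1 := D_D_A f i
  have h2 := D_D_A (R (m + 2) f) i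
  have h3 : A (D (D (R (m + 2) f))) i = A (R m (D (D f))) i := by
    refine A_congr fun x hx => ?_
    have e1 : m + 2 - (x + 1 + 1) = m - x := by omega
    have e2 : m + 2 - (x + 1) = m - x + 1 := by omega
    have e3 : m + 2 - x = m - x + 1 + 1 := by omega
    simp only [D, R, e1, e2, e3]
    ring
  rw [h3] at h2
  simp only [T]
  simp only [D, T] at h1 h2 ⊢
  linarith

lemma abs_sub_le_variation (F : ℕ → ℝ) {a b N : ℕ} (ha : a ≤ N) (hb : b ≤ N) :
    |F a - F b| ≤ ∑ y ∈ range N, |D F y| := by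
  wlog hab : a ≤ b generalizing a b
  · rw [abs_sub_comm]; exact this hb ha (by omega)
  have h := dist_le_Ico_sum_dist F hab
  rw [Real.dist_eq] at h
  refine h.trans ?_
  have e : ∀ y, dist (F y) (F (y + 1)) = |D F y| := fun y => by
    rw [dist_comm, Real.dist_eq, D]
  simp only [e]
  refine Finset.sum_le_sum_of_subset_of_nonneg (fun y hy => ?_) fun _ _ _ => abs_nonneg _
  simp only [Finset.mem_Ico, Finset.mem_range] at *
  omega

/-- The differences of the symmetrised function are antisymmetric, hence controlled by the total
variation of `D f`; the binomial average halves them once more. -/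
lemma abs_D_T_le (m : ℕ) (f : ℕ → ℝ) (i : ℕ) (h : i ≤ m + 1) :
    |D (T (m + 2) f) i| ≤ (1 / 4) * ∑ y ∈ range (m + 1), |D (D f) y| := by
  have h1 := congrFun (D_A f) i
  have h2 := congrFun (D_A (R (m + 2) f)) i
  have h3 : D (T (m + 2) f) i = (1 / 4) * A (fun x => 1 * D f x + 1 * D (R (m + 2) f) x) i := by
    rw [A_lin]
    simp only [D, T] at h1 h2 ⊢
    linarith
  rw [h3, abs_mul, abs_of_pos (by norm_num : (0 : ℝ) < 1 / 4)]
  refine mul_le_mul_of_nonneg_left (abs_A_le fun x hx => ?_) (by norm_num)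
  have e1 : m + 2 - (x + 1) = m + 1 - x := by omega
  have e2 : m + 2 - x = m + 1 - x + 1 := by omega
  have e : 1 * D f x + 1 * D (R (m + 2) f) x = D f x - D f (m + 1 - x) := by
    simp only [D, R, e1, e2]; ring
  rw [e]
  exact abs_sub_le_variation (D f) (by omega) (by omega)

/-! ### Powers of the position matrix -/

/-- The indicator function of `j`. -/
def δ (j x : ℕ) : ℝ := if x = j then 1 else 0

lemma sum_D_D_δ (m j : ℕ) : ∑ y ∈ range (m + 1), |D (D (δ j)) y| ≤ 4 := by
  have hn : ∀ x, 0 ≤ δ j x := fun x => by unfold δ; split_ifs <;> norm_num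
  have hs : ∀ N, ∑ x ∈ range N, δ j x ≤ 1 := fun N => by
    unfold δ; rw [Finset.sum_ite_eq']; split_ifs <;> norm_num
  have hb : ∀ y, |D (D (δ j)) y| ≤ δ j (y + 1 + 1) + 2 * δ j (y + 1) + δ j y := fun y => by
    have := hn y; have := hn (y + 1); have := hn (y + 1 + 1)
    simp only [D]
    rw [abs_le]; constructor <;> linarith
  refine (Finset.sum_le_sum fun y _ => hb y).trans ?_
  rw [Finset.sum_add_distrib, Finset.sum_add_distrib, ← Finset.mul_sum]
  have h0 := hs (m + 1)
  have h1 := hs (m + 2)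
  have h2 := hs (m + 3)
  rw [Finset.sum_range_succ'] at h1
  rw [Finset.sum_range_succ', Finset.sum_range_succ'] at h2
  linarith [hn 0, hn (0 + 1)]

lemma sum_D_D_iterate (m j k : ℕ) :
    ∑ y ∈ range (m + 1), |D (D ((T (m + 2))^[k] (δ j))) y| ≤ 4 * (1 / 4 : ℝ) ^ k := by
  induction k with
  | zero => simpa using sum_D_D_δ m j
  | succ k ih =>
    rw [Function.iterate_succ_apply']
    set f := (T (m + 2))^[k] (δ j)
    have h : ∑ y ∈ range (m + 1), |D (D (T (m + 2) f)) y|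
        = (1 / 4) * ∑ y ∈ range (m + 1), |T m (D (D f)) y| := by
      rw [Finset.mul_sum]
      refine Finset.sum_congr rfl fun y hy => ?_
      rw [D_D_T m f y (by simpa [Nat.lt_succ_iff] using hy), abs_mul,
        abs_of_pos (by norm_num : (0 : ℝ) < 1 / 4)]
    rw [h, pow_succ]
    have := sum_abs_T_le m (D (D f))
    linarith

lemma sum_iterate (m j k : ℕ) (hj : j ≤ m) :
    ∑ x ∈ range (m + 1), (T m)^[k] (δ j) x = 1 := by
  induction k with
  | zero =>
    simp only [Function.iterate_zero, id, δ]
    rw [Finset.sum_ite_eq', if_pos (by simp; omega)]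
  | succ k ih => rw [Function.iterate_succ_apply', sum_T, ih]

lemma shelfM_pow (m k : ℕ) (i j : Fin (m + 1)) :
    (shelfM (m + 1) ^ k) i j = (T m)^[k] (δ j) i := by
  induction k generalizing i with
  | zero =>
    simp only [pow_zero, Matrix.one_apply, Function.iterate_zero, id, δ, Fin.ext_iff]
  | succ k ih =>
    rw [pow_succ', Matrix.mul_apply, Function.iterate_succ_apply',
      T_eq_sum m _ i (by omega), ← Fin.sum_univ_eq_sum_range]
    exact Finset.sum_congr rfl fun x _ => by rw [ih]; rfl

/-- The quantitative bound `4 n 4^{-(k + 1)}` for `n = m + 3` cards and `k + 1` shuffles. At least one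
shuffle is needed: `abs_D_T_le` bounds first differences only after an application of `T`. -/
lemma abs_shelfM_pow_sub_le (m k : ℕ) (i j : Fin (m + 3)) :
    |(shelfM (m + 3) ^ (k + 1)) i j - 1 / ((m + 3 : ℕ) : ℝ)|
      ≤ ((m + 3 : ℕ) : ℝ) * (1 / 4 : ℝ) ^ k := by
  rw [shelfM_pow (m + 2) (k + 1) i j]
  set F := (T (m + 2))^[k + 1] (δ j) with hF
  have hD : ∀ y ≤ m + 1, |D F y| ≤ (1 / 4 : ℝ) ^ k := fun y hy => by
    rw [hF, Function.iterate_succ_apply']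
    have h1 := abs_D_T_le m ((T (m + 2))^[k] (δ j)) y hy
    have h2 := sum_D_D_iterate m j k
    linarith
  have hp : (0 : ℝ) < (1 / 4 : ℝ) ^ k := by positivity
  have hosc : ∀ x ≤ m + 2, |F i - F x| ≤ ((m + 3 : ℕ) : ℝ) * (1 / 4 : ℝ) ^ k := fun x hx => by
    refine (abs_sub_le_variation F (N := m + 2) (by omega) hx).trans ?_
    refine (Finset.sum_le_card_nsmul _ _ ((1 / 4 : ℝ) ^ k)
      fun y hy => hD y (by simp at hy; omega)).trans ?_
    rw [Finset.card_range, nsmul_eq_mul]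
    push_cast
    nlinarith
  have hsum : ∑ x ∈ range (m + 3), F x = 1 := sum_iterate (m + 2) j (k + 1) (by omega)
  have hn : (0 : ℝ) < ((m + 3 : ℕ) : ℝ) := by positivity
  have hav : F i - 1 / ((m + 3 : ℕ) : ℝ)
      = (∑ x ∈ range (m + 3), (F i - F x)) / ((m + 3 : ℕ) : ℝ) := by
    rw [Finset.sum_sub_distrib, hsum, Finset.sum_const, Finset.card_range, nsmul_eq_mul]
    field_simp
  rw [hav, abs_div, abs_of_pos hn, div_le_iff₀ hn]
  refine (Finset.abs_sum_le_sum_abs _ _).trans ?_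
  refine (Finset.sum_le_card_nsmul _ _ _
    fun x hx => hosc x (by simp at hx; omega)).trans (le_of_eq ?_)
  rw [Finset.card_range, nsmul_eq_mul]
  ring

end Shelf

theorem shelfM_power_close_to_uniform :
    ∃ C : ℝ, 0 < C ∧ ∀ ε : ℝ, 0 < ε → ∃ N : ℕ, ∀ n : ℕ, N ≤ n →
      ∀ k : ℕ, (1 + ε) * Real.logb 2 (n : ℝ) ≤ (k : ℝ) →
        ∀ i j : Fin n,
          |(shelfM n ^ k) i j - 1 / (n : ℝ)| ≤ C * (n : ℝ) ^ (-1 - 2 * ε : ℝ) := by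
  refine ⟨4, by norm_num, fun ε hε => ⟨3, fun n hn k hk i j => ?_⟩⟩
  obtain ⟨m, rfl⟩ : ∃ m, n = m + 3 := ⟨n - 3, by omega⟩
  have hn1 : (1 : ℝ) < ((m + 3 : ℕ) : ℝ) := by exact_mod_cast (by omega : 1 < m + 3)
  have hn0 : (0 : ℝ) < ((m + 3 : ℕ) : ℝ) := by linarith
  have hlog : 0 < Real.logb 2 ((m + 3 : ℕ) : ℝ) := Real.logb_pos (by norm_num) hn1
  have hk0 : (0 : ℝ) < k := lt_of_lt_of_le (by positivity) hk
  obtain ⟨k, rfl⟩ : ∃ k', k = k' + 1 := 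
    have : 0 < k := by exact_mod_cast hk0
    ⟨k - 1, by omega⟩
  refine (Shelf.abs_shelfM_pow_sub_le m k i j).trans ?_
  set x : ℝ := ((m + 3 : ℕ) : ℝ)
  have hpow : x ^ (1 + ε) ≤ (2 : ℝ) ^ (k + 1) := by
    rw [← Real.rpow_natCast, ← Real.logb_le_iff_le_rpow (by norm_num) (by positivity),
      Real.logb_rpow_eq_mul_logb_of_pos hn0]
    exact hk
  have hpos : 0 < x ^ (1 + ε) := by positivity
  have hx : x ^ (-1 - 2 * ε : ℝ) = x * ((x ^ (1 + ε)) ^ 2)⁻¹ := by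
    rw [← Real.rpow_natCast, ← Real.rpow_mul hn0.le, ← Real.rpow_neg hn0.le]
    nth_rewrite 2 [← Real.rpow_one x]
    rw [← Real.rpow_add hn0]
    congr 1
    push_cast
    ring
  have h4 : (1 / 4 : ℝ) ^ k = 4 * (((2 : ℝ) ^ (k + 1)) ^ 2)⁻¹ := by
    rw [← pow_mul, mul_comm (k + 1) 2, pow_mul, pow_succ, one_div, inv_pow]
    norm_num
    ring
  rw [hx, h4]
  have hinv : (((2 : ℝ) ^ (k + 1)) ^ 2)⁻¹ ≤ ((x ^ (1 + ε)) ^ 2)⁻¹ := by gcongr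
  nlinarith [mul_le_mul_of_nonneg_left hinv hn0.le]
end

section
/- Let n ≥ 2 and let M be the position matrix of a single-shelf shuffle. Define the strategy g : {1,…,n} → {1,…,n} by g(j) = 2j−1 for 1 ≤ j ≤ ⌈n/2⌉ and g(j) = 2(n−j+1)−1 for ⌈n/2⌉ < j ≤ n. Then the expected number of correct guesses under g satisfies Σ_{j=1}^{n} M(g(j), j) ≥ √(2n/π) − 1; trivially Σ_{j=1}^{n} M(g(j), j) ≤ Σ_{j=1}^{n} max_{1 ≤ i ≤ n} M(i,j); and there exists a universal constant C > 0 such that for all n ≥ 2, Σ_{j=1}^{n} max_{1 ≤ i ≤ n} M(i,j) ≤ √(2n/π) + 1 + C n^{−1/2}. -/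
/-!
Write `a k = C(2k,k) / 4^k`. As a function of `i`, the ratio `C(i,k) / 2^i` increases up to
`i = 2k` and decreases afterwards, so it is at most `a k`. Put `m = n - 1` and
`k = min j (m - j)`. The strategy picks `i = 2k`, which already yields at least `a k / 2`. On the
other hand every entry of column `j` is at most `a k / 2 + C(m,j) / 2^(m+1)`: the second binomial
`C(i, m-k)` has `m ≤ 2(m-k)`, so its ratio is still increasing on `i ≤ m`. The extra terms sum to
`1/2` over `j` (binomial theorem), so both sums are governed by `∑ j, a (min j (m - j)) / 2`.

Since `∑_{k<K} a k = 2K a K`, that sum equals `2K a K`, plus `a K / 2` if `n` is odd, where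
`K = ⌊n/2⌋`. The Wallis product gives `2/π ≤ (2K+1) (a K)^2` and `K π (a K)^2 ≤ 1`, hence
`√(2n/π) - 1 ≤ 2K a K ≤ √(2n/π)`.
The upper bound thus holds even without the error term, and `C = 1` is used.
-/

open Matrix BigOperators

/-- The guessing strategy `G` (0-indexed): at position `j` guess card `2j` if
`j < ⌈n/2⌉`, and card `2(n-1-j)` otherwise.  (One-based: guess `2j-1` for
`j ≤ ⌈n/2⌉` and `2(n-j+1)-1` for `j > ⌈n/2⌉`.) -/
def gStrat (n : ℕ) (j : Fin n) : Fin n :=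
  if h : j.val < (n + 1) / 2 then
    ⟨2 * j.val, by have := j.isLt; omega⟩
  else
    ⟨2 * (n - 1 - j.val), by have := j.isLt; omega⟩

/-- The normalized central binomial coefficient `C(2k,k) / 4^k`. -/
noncomputable def cbRatio (k : ℕ) : ℝ := (Nat.centralBinom k : ℝ) / 4 ^ k

lemma cbRatio_pos (k : ℕ) : 0 < cbRatio k := by
  have : 0 < (Nat.centralBinom k : ℝ) := by exact_mod_cast Nat.centralBinom_pos k
  unfold cbRatio; positivity

lemma cbRatio_eq (k : ℕ) : cbRatio k = (1 / 2 : ℝ) ^ (2 * k) * (Nat.choose (2 * k) k : ℝ) := by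
  unfold cbRatio
  have h4 : (1 / 2 : ℝ) ^ (2 * k) = (4 ^ k)⁻¹ := by
    rw [pow_mul, ← inv_pow]; norm_num
  rw [Nat.centralBinom, h4, div_eq_mul_inv, mul_comm]

lemma cbRatio_succ (k : ℕ) : (2 * k + 2) * cbRatio (k + 1) = (2 * k + 1) * cbRatio k := by
  have h : ((k : ℝ) + 1) * (Nat.centralBinom (k + 1) : ℝ)
      = 2 * (2 * k + 1) * (Nat.centralBinom k : ℝ) := by
    exact_mod_cast Nat.succ_mul_centralBinom_succ k
  unfold cbRatio
  rw [pow_succ]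
  field_simp
  linarith

lemma cbRatio_le_one (k : ℕ) : cbRatio k ≤ 1 := by
  induction k with
  | zero => simp [cbRatio]
  | succ k ih =>
    have h := cbRatio_succ k
    have hk : (0 : ℝ) ≤ k := Nat.cast_nonneg k
    nlinarith [cbRatio_pos k, cbRatio_pos (k + 1)]

lemma sum_cbRatio (K : ℕ) : ∑ k ∈ Finset.range K, cbRatio k = 2 * K * cbRatio K := by
  induction K with
  | zero => simp
  | succ K ih =>
    rw [Finset.sum_range_succ, ih]
    push_cast
    linarith [cbRatio_succ K]

/-- The partial Wallis product in terms of central binomial coefficients. -/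
lemma wallis_mul_cbRatio (k : ℕ) :
    Real.Wallis.W k * ((2 * k + 1) * cbRatio k ^ 2) = 1 := by
  induction k with
  | zero => simp [Real.Wallis.W, cbRatio]
  | succ k ih =>
    have h : cbRatio (k + 1) = (2 * k + 1) / (2 * k + 2) * cbRatio k := by
      have := cbRatio_succ k
      field_simp
      linarith
    rw [Real.Wallis.W_succ, h]
    refine Eq.trans ?_ ih
    push_cast
    field_simp
    ring

lemma two_div_pi_le (k : ℕ) : 2 / Real.pi ≤ (2 * k + 1) * cbRatio k ^ 2 := by
  have h := wallis_mul_cbRatio k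
  have hW := Real.Wallis.W_le k
  have hx : 0 < (2 * k + 1) * cbRatio k ^ 2 := by
    have := cbRatio_pos k
    positivity
  rw [div_le_iff₀ Real.pi_pos]
  nlinarith

lemma cbRatio_sq_le (k : ℕ) : k * Real.pi * cbRatio k ^ 2 ≤ 1 := by
  have h := wallis_mul_cbRatio k
  have hW := Real.Wallis.le_W k
  have ha := cbRatio_pos k
  have hk : (0 : ℝ) ≤ k := Nat.cast_nonneg k
  have hpi := Real.pi_pos
  have h1 : ((2 : ℝ) * k + 1) / (2 * k + 2) * (Real.pi / 2) * ((2 * k + 1) * cbRatio k ^ 2) ≤ 1 := by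
    refine (mul_le_mul_of_nonneg_right hW (by positivity)).trans h.le
  refine le_trans ?_ h1
  have h2 : ((2 : ℝ) * k + 1) / (2 * k + 2) * (Real.pi / 2) * ((2 * k + 1) * cbRatio k ^ 2)
      = (2 * k + 1) ^ 2 / (4 * (k + 1)) * Real.pi * cbRatio k ^ 2 := by
    field_simp
    ring
  rw [h2]
  gcongr
  rw [le_div_iff₀ (by positivity)]
  nlinarith

/-- `C(i,l) / 2^i` is increasing in `i` on `i ≤ 2l`. -/
lemma half_pow_choose_mono (l m : ℕ) (hm : m ≤ 2 * l) (i : ℕ) (hi : i ≤ m) :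
    (1 / 2 : ℝ) ^ i * (Nat.choose i l : ℝ) ≤ (1 / 2 : ℝ) ^ m * (Nat.choose m l : ℝ) := by
  induction m, hi using Nat.le_induction with
  | base => exact le_rfl
  | succ m hi ih =>
    refine (ih (by omega)).trans ?_
    have key : 2 * Nat.choose m l ≤ Nat.choose (m + 1) l := by
      have h := Nat.choose_mul_succ_eq m l
      rcases Nat.lt_or_ge m l with hlt | hge
      · simp [Nat.choose_eq_zero_of_lt hlt]
      · have h2 : 2 * (m + 1 - l) ≤ m + 1 := by omega
        have h3 : 0 < m + 1 - l := by omega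
        nlinarith [Nat.mul_le_mul_left (Nat.choose m l) h2]
    have key' : 2 * (Nat.choose m l : ℝ) ≤ Nat.choose (m + 1) l := by exact_mod_cast key
    rw [pow_succ]
    have hp : (0 : ℝ) < (1 / 2) ^ m := by positivity
    nlinarith

/-- `C(i,k) / 2^i` is maximal at `i = 2k`. -/
lemma half_pow_choose_le (k i : ℕ) : (1 / 2 : ℝ) ^ i * (Nat.choose i k : ℝ) ≤ cbRatio k := by
  rw [cbRatio_eq]
  rcases Nat.le_total i (2 * k) with hi | hi
  · exact half_pow_choose_mono k (2 * k) le_rfl i hi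
  · induction i, hi using Nat.le_induction with
    | base => exact le_rfl
    | succ m hi ih =>
      refine le_trans ?_ ih
      have key : Nat.choose (m + 1) k ≤ 2 * Nat.choose m k := by
        have h := Nat.choose_mul_succ_eq m k
        have h2 : m + 1 ≤ 2 * (m + 1 - k) := by omega
        have h3 : 0 < m + 1 - k := by omega
        nlinarith [Nat.mul_le_mul_left (Nat.choose m k) h2]
      have key' : (Nat.choose (m + 1) k : ℝ) ≤ 2 * Nat.choose m k := by exact_mod_cast key
      rw [pow_succ]
      have hp : (0 : ℝ) < (1 / 2) ^ m := by positivity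
      nlinarith

lemma sum_cbRatio_min (n : ℕ) :
    ∑ j : Fin n, cbRatio (min j.val (n - 1 - j.val)) =
      ∑ k ∈ Finset.range ((n + 1) / 2), cbRatio k + ∑ k ∈ Finset.range (n / 2), cbRatio k := by
  rw [Fin.sum_univ_eq_sum_range (fun j => cbRatio (min j (n - 1 - j))) n]
  have hn : Finset.range n = Finset.range ((n + 1) / 2 + n / 2) := by congr 1; omega
  rw [hn, Finset.sum_range_add, ← Finset.sum_range_reflect _ (n / 2)]
  congr 1
  · refine Finset.sum_congr rfl fun k hk => ?_
    rw [Finset.mem_range] at hk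
    congr 1; omega
  · refine Finset.sum_congr rfl fun k hk => ?_
    rw [Finset.mem_range] at hk
    congr 1; omega

/-- The sum is `2K a K`, plus `a K / 2 ≤ 1 / 2` when `n` is odd, with `K = ⌊n/2⌋`. -/
lemma sum_cbRatio_min_bounds (n : ℕ) :
    2 * (n / 2 : ℕ) * cbRatio (n / 2) ≤ ∑ j : Fin n, cbRatio (min j.val (n - 1 - j.val)) / 2 ∧
    ∑ j : Fin n, cbRatio (min j.val (n - 1 - j.val)) / 2
      ≤ 2 * (n / 2 : ℕ) * cbRatio (n / 2) + 1 / 2 := by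
  rw [← Finset.sum_div, sum_cbRatio_min]
  have h1 := cbRatio_pos (n / 2)
  have h2 := cbRatio_le_one (n / 2)
  rcases Nat.even_or_odd n with h | h
  · have : (n + 1) / 2 = n / 2 := by obtain ⟨r, hr⟩ := h; omega
    rw [this, sum_cbRatio]
    constructor <;> linarith
  · have : (n + 1) / 2 = n / 2 + 1 := by obtain ⟨r, hr⟩ := h; omega
    rw [this, Finset.sum_range_succ, sum_cbRatio]
    constructor <;> linarith

lemma sqrt_sub_one_le (n : ℕ) :
    Real.sqrt (2 * (n : ℝ) / Real.pi) - 1 ≤ 2 * (n / 2 : ℕ) * cbRatio (n / 2) := by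
  have hn : (n : ℝ) ≤ 2 * (n / 2 : ℕ) + 1 := by
    have : n ≤ 2 * (n / 2) + 1 := by omega
    exact_mod_cast this
  generalize n / 2 = K at hn ⊢
  have hlow := two_div_pi_le K
  have ha := cbRatio_pos K
  have ha1 := cbRatio_le_one K
  have h : Real.sqrt (2 * (n : ℝ) / Real.pi) ≤ (2 * K + 1) * cbRatio K := by
    apply Real.sqrt_le_iff.mpr
    refine ⟨by positivity, ?_⟩
    have : 2 * (n : ℝ) / Real.pi = n * (2 / Real.pi) := by ring
    rw [this, mul_pow, sq ((2 : ℝ) * K + 1), mul_assoc]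
    have : 0 < 2 / Real.pi := by have := Real.pi_pos; positivity
    gcongr
  linarith

lemma le_sqrt_bound (n : ℕ) :
    2 * (n / 2 : ℕ) * cbRatio (n / 2) ≤ Real.sqrt (2 * (n : ℝ) / Real.pi) := by
  have hn : (2 : ℝ) * (n / 2 : ℕ) ≤ n := by
    have : 2 * (n / 2) ≤ n := by omega
    exact_mod_cast this
  generalize n / 2 = K at hn ⊢
  have hup := cbRatio_sq_le K
  have hK : (0 : ℝ) ≤ K := Nat.cast_nonneg K
  apply Real.le_sqrt_of_sq_le
  rw [le_div_iff₀ Real.pi_pos]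
  nlinarith [mul_le_mul_of_nonneg_left hup hK]

lemma half_cbRatio_le_shelfM (n : ℕ) (j : Fin n) :
    cbRatio (min j.val (n - 1 - j.val)) / 2 ≤ shelfM n (gStrat n j) j := by
  have hj := j.isLt
  unfold shelfM gStrat
  split_ifs with h
  · have hm : min j.val (n - 1 - j.val) = j.val := by omega
    rw [hm, cbRatio_eq]
    dsimp only
    rw [pow_succ]
    have : (0 : ℝ) ≤ (1 / 2 : ℝ) ^ (2 * j.val) * (Nat.choose (2 * j.val) (n - 1 - j.val) : ℝ) := by
      positivity
    linarith
  · have hm : min j.val (n - 1 - j.val) = n - 1 - j.val := by omega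
    rw [hm, cbRatio_eq]
    dsimp only
    rw [pow_succ]
    have : (0 : ℝ) ≤ (1 / 2 : ℝ) ^ (2 * (n - 1 - j.val)) *
        (Nat.choose (2 * (n - 1 - j.val)) j.val : ℝ) := by
      positivity
    linarith

lemma shelfM_le (n : ℕ) (i j : Fin n) :
    shelfM n i j ≤ cbRatio (min j.val (n - 1 - j.val)) / 2 +
      (1 / 2 : ℝ) ^ n * (Nat.choose (n - 1) j.val : ℝ) := by
  have hi := i.isLt
  have hj := j.isLt
  have hn : (1 / 2 : ℝ) ^ n = (1 / 2 : ℝ) ^ (n - 1) * (1 / 2) := by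
    rw [← pow_succ]; congr 1; omega
  have hs : Nat.choose (n - 1) (n - 1 - j.val) = Nat.choose (n - 1) j.val :=
    Nat.choose_symm (by omega)
  unfold shelfM
  rw [hn, pow_succ]
  rcases Nat.le_total j.val (n - 1 - j.val) with h | h
  · rw [min_eq_left h]
    have h1 := half_pow_choose_le j.val i.val
    have h2 := half_pow_choose_mono (n - 1 - j.val) (n - 1) (by omega) i.val (by omega)
    rw [hs] at h2
    linarith
  · rw [min_eq_right h]
    have h1 := half_pow_choose_le (n - 1 - j.val) i.val
    have h2 := half_pow_choose_mono j.val (n - 1) (by omega) i.val (by omega)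
    linarith

lemma sum_choose_half (n : ℕ) (hn : 2 ≤ n) :
    ∑ j : Fin n, (1 / 2 : ℝ) ^ n * (Nat.choose (n - 1) j.val : ℝ) = 1 / 2 := by
  obtain ⟨m, rfl⟩ : ∃ m, n = m + 1 := ⟨n - 1, by omega⟩
  rw [← Finset.mul_sum, Fin.sum_univ_eq_sum_range (fun j => (Nat.choose (m + 1 - 1) j : ℝ)) (m + 1)]
  have h : ∑ j ∈ Finset.range (m + 1), (Nat.choose m j : ℝ) = 2 ^ m := by
    exact_mod_cast Nat.sum_range_choose m
  rw [Nat.add_sub_cancel, h, pow_succ, mul_right_comm, ← mul_pow]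
  norm_num

theorem guessing_one_shuffle :
    (∀ n : ℕ, 2 ≤ n →
      Real.sqrt (2 * (n : ℝ) / Real.pi) - 1 ≤ ∑ j : Fin n, shelfM n (gStrat n j) j) ∧
    (∀ n : ℕ, 2 ≤ n →
      ∑ j : Fin n, shelfM n (gStrat n j) j ≤ ∑ j : Fin n, ⨆ i : Fin n, shelfM n i j) ∧
    (∃ C : ℝ, 0 < C ∧ ∀ n : ℕ, 2 ≤ n →
      ∑ j : Fin n, ⨆ i : Fin n, shelfM n i j ≤
        Real.sqrt (2 * (n : ℝ) / Real.pi) + 1 + C * (n : ℝ) ^ (-(1/2) : ℝ)) := by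
  refine ⟨fun n _ => ?_, fun n _ => ?_, 1, one_pos, fun n hn => ?_⟩
  · exact (sqrt_sub_one_le n).trans ((sum_cbRatio_min_bounds n).1.trans
      (Finset.sum_le_sum fun j _ => half_cbRatio_le_shelfM n j))
  · exact Finset.sum_le_sum fun j _ =>
      le_ciSup (f := fun i => shelfM n i j) (Set.finite_range _).bddAbove (gStrat n j)
  · have : Nonempty (Fin n) := ⟨⟨0, by omega⟩⟩
    have h1 : ∑ j : Fin n, ⨆ i : Fin n, shelfM n i j ≤
        ∑ j : Fin n, (cbRatio (min j.val (n - 1 - j.val)) / 2 +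
          (1 / 2 : ℝ) ^ n * (Nat.choose (n - 1) j.val : ℝ)) :=
      Finset.sum_le_sum fun j _ => ciSup_le fun i => shelfM_le n i j
    rw [Finset.sum_add_distrib, sum_choose_half n hn] at h1
    have h2 := (sum_cbRatio_min_bounds n).2
    have h3 := le_sqrt_bound n
    have h4 : (0 : ℝ) ≤ (n : ℝ) ^ (-(1/2) : ℝ) := by positivity
    linarith
end

section
/- There exists a universal constant C > 0 such that for every ε > 0 there is an N_ε with the following property: for every integer n ≥ N_ε and every integer k with k ≥ (1+ε) log₂ n, the quantity E_{n,k} := Σ_{j=1}^{n} max_{1 ≤ i ≤ n} (M^k)(i,j), where M is the position matrix of a single-shelf shuffle on n cards, satisfies |E_{n,k} − 1| ≤ C · n^{−2ε}. -/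
/-!
A row vector `v` on `{0, …, N}`, with `n = N + 1` cards, is identified with its generating polynomial
`∑ v_j z ^ j`. One shuffle sends `p (z)` to the average of `p ((1 + z) / 2)` and its reversal in
degree `N` (`coeffVec_vecMul_shelfM`). It follows that the uniform vector is fixed and that for odd
`d = 2 * t + 1` the polynomial `(z - 1) ^ d * (z ^ (N - d) - 1)` is a left eigenvector with
eigenvalue `4 ^ (-(t + 1))` (`coeffVec_eigPoly_vecMul`).

After one shuffle every row is symmetric under reversal, so its difference from the uniform
distribution is a convex combination of the centred symmetric pairs `(z ^ j + z ^ (N - j)) / 2`.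
Telescoping in `j` reduces these pairs to the polynomials `(z - 1) * (z ^ (N - 1 - a) - z ^ a)`.
Within the family `(z - 1) ^ d * (z ^ (N - d - a) - z ^ a)` the second difference in `a` is again a
member, with `d + 2` in place of `d`. Solving this discrete Poisson problem on an interval of length
at most `N` costs a factor `O(n ^ 2)`, so inductively the coefficient of the `t`-th eigenvector is
at most a constant times `n * (4 * n ^ 2) ^ t` (`eigBound_family`, `exists_eigBound_row`).

The `t`-th eigenvector has `ℓ¹` norm at most `4 ^ (t + 1)`. The bounds do not depend on the row, so
summing the entrywise bounds over the columns gives at most a constant times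
`∑ t, n * (16 * n ^ 2) ^ t * 4 ^ (-(t + 1) * k)` up to a shift of `k` by one, a geometric series that
is `O(n * 4 ^ (-k))` once `n ^ 2 / 4 ^ k ≤ n ^ (-2 * ε)` is small.
-/


open Matrix BigOperators

/-! ### Generating polynomials and eigenvectors -/

open Polynomial in
/-- The vector of the first `N + 1` coefficients of a polynomial. -/
noncomputable def coeffVec (N : ℕ) : ℝ[X] →ₗ[ℝ] (Fin (N + 1) → ℝ) :=
  LinearMap.pi fun j => lcoeff ℝ j.val

open Polynomial in
theorem coeffVec_apply (N : ℕ) (p : ℝ[X]) (j : Fin (N + 1)) :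
    coeffVec N p j = p.coeff j := rfl

open Polynomial in
/-- The affine substitution `z ↦ (1 + z) / 2`. -/
noncomputable def halfSum : ℝ[X] := C (1 / 2) * (1 + X)

open Polynomial in
theorem natDegree_halfSum_le : halfSum.natDegree ≤ 1 := by
  unfold halfSum; compute_degree

open Polynomial in
theorem reflect_halfSum : reflect 1 halfSum = halfSum := by
  unfold halfSum
  rw [reflect_C_mul, reflect_add, reflect_one, reflect_one_X, pow_one, add_comm]

open Polynomial in
theorem natDegree_X_sub_one_le : (X - 1 : ℝ[X]).natDegree ≤ 1 := by
  compute_degree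

open Polynomial in
theorem reflect_X_sub_one : reflect 1 (X - 1 : ℝ[X]) = -(X - 1) := by
  rw [reflect_sub, reflect_one, reflect_one_X, pow_one, neg_sub]

open Polynomial in
theorem natDegree_pow_le_self {p : ℝ[X]} (hp : p.natDegree ≤ 1) (n : ℕ) :
    (p ^ n).natDegree ≤ n := by
  simpa using natDegree_pow_le_of_le n hp

open Polynomial in
theorem reflect_pow_of_natDegree_le_one {p : ℝ[X]} (hp : p.natDegree ≤ 1) (n : ℕ) :
    reflect n (p ^ n) = reflect 1 p ^ n := by
  induction n with
  | zero => simp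
  | succ n ih =>
    rw [pow_succ, pow_succ, reflect_mul _ _ (natDegree_pow_le_self hp n) hp, ih]

open Polynomial in
/-- In terms of generating functions, the shuffle acts on row vectors by the substitution
`z ↦ (1 + z) / 2` followed by averaging with the reversed polynomial. -/
theorem coeffVec_vecMul_shelfM (N : ℕ) (p : ℝ[X]) (hp : p.natDegree ≤ N) :
    coeffVec N p ᵥ* shelfM (N + 1) =
      coeffVec N (C (1 / 2) * (p.comp halfSum + reflect N (p.comp halfSum))) := by
  have key : ∀ m : ℕ, (p.comp halfSum).coeff m =
      ∑ i : Fin (N + 1), p.coeff i * ((1 / 2) ^ (i : ℕ) * (Nat.choose i m : ℝ)) := by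
    intro m
    rw [Polynomial.comp, eval₂_eq_sum_range' C (Nat.lt_succ_of_le hp) halfSum, finsetSum_coeff,
      Finset.sum_range]
    refine Finset.sum_congr rfl fun i _ => ?_
    rw [halfSum, mul_pow, ← C_pow, coeff_C_mul, coeff_C_mul, coeff_one_add_X_pow]
  ext j
  have hj : (j : ℕ) ≤ N := Nat.lt_succ_iff.mp j.2
  rw [coeffVec_apply, coeff_C_mul, coeff_add, coeff_reflect, revAt_le hj, key, key,
    ← Finset.sum_add_distrib, Finset.mul_sum]
  simp only [vecMul, dotProduct, coeffVec_apply, shelfM, Nat.add_sub_cancel]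
  refine Finset.sum_congr rfl fun i _ => ?_
  rw [pow_succ]; ring

open Polynomial in
/-- The polynomial `(z - 1) ^ d * (z ^ (N - d) - 1)` with `d = 2 * t + 1`. Its coefficient vector is a
left eigenvector of the shuffle matrix; truncated subtraction makes it vanish when `N ≤ d`. -/
noncomputable def eigPoly (N t : ℕ) : ℝ[X] :=
  (X - 1) ^ (2 * t + 1) * (X ^ (N - (2 * t + 1)) - 1)

theorem eigPoly_eq_zero {N t : ℕ} (h : N < 2 * t + 1) : eigPoly N t = 0 := by
  simp [eigPoly, Nat.sub_eq_zero_of_le h.le]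

open Polynomial in
theorem coeffVec_eigPoly_vecMul (N t : ℕ) :
    coeffVec N (eigPoly N t) ᵥ* shelfM (N + 1) =
      ((1 / 4 : ℝ) ^ (t + 1)) • coeffVec N (eigPoly N t) := by
  rcases lt_or_ge N (2 * t + 1) with h | h
  · simp [eigPoly_eq_zero h]
  obtain ⟨L, rfl⟩ := Nat.exists_eq_add_of_le h
  have hX : (X - 1 : ℝ[X]).natDegree ≤ 1 := natDegree_X_sub_one_le
  have hdeg : (eigPoly (2 * t + 1 + L) t).natDegree ≤ 2 * t + 1 + L := by
    rw [eigPoly, Nat.add_sub_cancel_left]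
    refine natDegree_mul_le_of_le (natDegree_pow_le_self hX _) ?_
    compute_degree
  have hH : halfSum - 1 = C (1 / 2) * (X - 1) := by
    have : (C (1 / 2) : ℝ[X]) + C (1 / 2) = 1 := by
      rw [← C_add, ← C_1]; norm_num
    rw [halfSum]; linear_combination this
  have hcomp : (eigPoly (2 * t + 1 + L) t).comp halfSum =
      C ((1 / 2) ^ (2 * t + 1)) * ((X - 1) ^ (2 * t + 1) * (halfSum ^ L - 1)) := by
    rw [eigPoly, Nat.add_sub_cancel_left]
    simp only [mul_comp, pow_comp, sub_comp, X_comp, one_comp]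
    rw [hH, mul_pow, C_pow, mul_assoc]
  -- Since `2 * t + 1` is odd, `(z - 1) ^ (2 * t + 1) * ((1 + z) / 2) ^ L` changes sign under
  -- reversal, so this term cancels in the symmetrization.
  have hrefl : reflect (2 * t + 1 + L) ((X - 1) ^ (2 * t + 1) * (halfSum ^ L - 1)) =
      -(X - 1 : ℝ[X]) ^ (2 * t + 1) * (halfSum ^ L - X ^ L) := by
    have h1 : (halfSum ^ L - 1).natDegree ≤ L :=
      (natDegree_sub_le _ _).trans
        (max_le (natDegree_pow_le_self natDegree_halfSum_le L) (by simp))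
    rw [reflect_mul _ _ (natDegree_pow_le_self hX _) h1,
      reflect_pow_of_natDegree_le_one hX, reflect_X_sub_one, reflect_sub,
      reflect_pow_of_natDegree_le_one natDegree_halfSum_le, reflect_halfSum, reflect_one,
      Odd.neg_pow ⟨t, rfl⟩]
  rw [coeffVec_vecMul_shelfM _ _ hdeg, hcomp, reflect_C_mul, hrefl, ← map_smul]
  congr 1
  rw [smul_eq_C_mul, eigPoly, Nat.add_sub_cancel_left]
  have hc : (C ((1 / 4) ^ (t + 1)) : ℝ[X]) = C (1 / 2) * C ((1 / 2) ^ (2 * t + 1)) := by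
    rw [← C_mul]; congr 1
    rw [← pow_succ', show 2 * t + 1 + 1 = 2 * (t + 1) by ring, pow_mul]; norm_num
  rw [hc]; ring

open Polynomial in
/-- The uniform distribution is stationary. -/
theorem one_vecMul_shelfM (N : ℕ) :
    (fun _ => 1 : Fin (N + 1) → ℝ) ᵥ* shelfM (N + 1) = fun _ => 1 := by
  set G : ℝ[X] := ∑ i ∈ Finset.range (N + 1), X ^ i with hG
  have hGdeg : G.natDegree ≤ N :=
    natDegree_sum_le_of_forall_le _ _ fun i hi => by
      rw [natDegree_X_pow]; exact Nat.lt_succ_iff.mp (Finset.mem_range.mp hi)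
  have hvec : (fun _ => 1 : Fin (N + 1) → ℝ) = coeffVec N G := by
    ext j
    rw [coeffVec_apply, hG, finsetSum_coeff]
    simp only [coeff_X_pow]
    rw [Finset.sum_ite_eq]
    simp [Nat.lt_succ_iff.mp j.2]
  have hmul : (X - 1) * G = X ^ (N + 1) - 1 := mul_geom_sum _ _
  have h2 : (C (1 / 2) : ℝ[X]) + C (1 / 2) = 1 := by
    rw [← C_add, ← C_1]; norm_num
  have hqdeg : (G.comp halfSum).natDegree ≤ N :=
    natDegree_comp_le.trans
      ((Nat.mul_le_mul hGdeg natDegree_halfSum_le).trans (by simp))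
  have hq : (X - 1) * (C (1 / 2) * G.comp halfSum) = halfSum ^ (N + 1) - 1 := by
    have := congrArg (fun p => p.comp halfSum) hmul
    simp only [mul_comp, pow_comp, sub_comp, X_comp, one_comp] at this
    have hH : halfSum = C (1 / 2) * (1 + X) := rfl
    rw [← this]
    linear_combination -(G.comp halfSum) * hH - G.comp halfSum * h2
  have hr : -(X - 1) * (C (1 / 2) * reflect N (G.comp halfSum)) =
      halfSum ^ (N + 1) - X ^ (N + 1) := by
    have := congrArg (reflect (1 + N)) hq
    rw [reflect_mul _ _ natDegree_X_sub_one_le ((natDegree_C_mul_le _ _).trans hqdeg),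
      reflect_X_sub_one, reflect_C_mul, add_comm 1 N, reflect_sub,
      reflect_pow_of_natDegree_le_one natDegree_halfSum_le, reflect_halfSum, reflect_one] at this
    exact this
  rw [hvec, coeffVec_vecMul_shelfM _ _ hGdeg]
  congr 1
  have hne : (X - 1 : ℝ[X]) ≠ 0 := X_sub_C_ne_zero (1 : ℝ)
  apply mul_left_cancel₀ hne
  linear_combination hq - hr - hmul

/-! ### Eigenexpansions with controlled coefficients -/

/-- `EigBound N W p` says that `p` is a combination of the eigenpolynomials `eigPoly N t` whose
`t`-th coefficient is at most `W * (4 * (N + 1) ^ 2) ^ t` in absolute value; the least such `W`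
is a weighted supremum norm of the coefficients. -/
def EigBound (N : ℕ) (W : ℝ) (p : Polynomial ℝ) : Prop :=
  ∃ b : ℕ → ℝ, (∀ t, |b t| ≤ W * (4 * ((N : ℝ) + 1) ^ 2) ^ t) ∧
    p = ∑ t ∈ Finset.range (N + 1), b t • eigPoly N t

namespace EigBound

variable {N : ℕ}

theorem mono {W W' : ℝ} {p : Polynomial ℝ} (h : EigBound N W p) (hW : W ≤ W') :
    EigBound N W' p := by
  obtain ⟨b, hb, rfl⟩ := h
  exact ⟨b, fun t => (hb t).trans (by gcongr), rfl⟩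

theorem zero : EigBound N 0 0 := ⟨fun _ => 0, by simp, by simp⟩

theorem add {W W' : ℝ} {p q : Polynomial ℝ} (hp : EigBound N W p) (hq : EigBound N W' q) :
    EigBound N (W + W') (p + q) := by
  obtain ⟨b, hb, rfl⟩ := hp
  obtain ⟨c, hc, rfl⟩ := hq
  refine ⟨fun t => b t + c t, fun t => ?_, by simp only [add_smul, Finset.sum_add_distrib]⟩
  rw [add_mul]
  exact (abs_add_le _ _).trans (add_le_add (hb t) (hc t))

theorem smul {W : ℝ} {p : Polynomial ℝ} (c : ℝ) (hp : EigBound N W p) :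
    EigBound N (|c| * W) (c • p) := by
  obtain ⟨b, hb, rfl⟩ := hp
  refine ⟨fun t => c * b t, fun t => ?_, by simp only [mul_smul, Finset.smul_sum]⟩
  rw [abs_mul, mul_assoc]
  exact mul_le_mul_of_nonneg_left (hb t) (abs_nonneg c)

theorem neg {W : ℝ} {p : Polynomial ℝ} (hp : EigBound N W p) : EigBound N W (-p) := by
  simpa using hp.smul (-1)

theorem sum {ι : Type*} (s : Finset ι) (W : ι → ℝ) (p : ι → Polynomial ℝ)
    (h : ∀ i ∈ s, EigBound N (W i) (p i)) :
    EigBound N (∑ i ∈ s, W i) (∑ i ∈ s, p i) := by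
  classical
  induction s using Finset.induction_on with
  | empty => simpa using zero
  | insert i s hi ih =>
    rw [Finset.sum_insert hi, Finset.sum_insert hi]
    exact (h i (Finset.mem_insert_self i s)).add
      (ih fun j hj => h j (Finset.mem_insert_of_mem hj))

theorem sum_const {ι : Type*} (s : Finset ι) (W : ℝ) (p : ι → Polynomial ℝ)
    (h : ∀ i ∈ s, EigBound N W (p i)) : EigBound N (s.card * W) (∑ i ∈ s, p i) := by
  simpa using sum s (fun _ => W) p h

theorem eigPoly {s : ℕ} (hs : s ≤ N) :
    EigBound N ((4 * ((N : ℝ) + 1) ^ 2)⁻¹ ^ s) (eigPoly N s) := by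
  refine ⟨fun t => if t = s then 1 else 0, fun t => ?_, ?_⟩
  · beta_reduce
    split_ifs with h
    · subst h
      rw [← mul_pow, inv_mul_cancel₀ (by positivity), one_pow, abs_one]
    · rw [abs_zero]; positivity
  · simp [Nat.lt_succ_of_le hs]

end EigBound

/-- Two discrete summations recover a sequence from its second differences `v`. -/
theorem eq_sum_sum_of_second_difference {E : Type*} [AddCommGroup E] [Module ℝ E] (u v : ℕ → E)
    (L : ℕ) (h : ∀ b, b + 2 ≤ L → u (b + 2) - u (b + 1) = u (b + 1) - u b + v b) :
    ∀ a, a ≤ L → u a = u 0 + (a : ℝ) • (u 1 - u 0) +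
      ∑ c ∈ Finset.range a, ∑ b ∈ Finset.range c, v b := by
  have hD : ∀ c, c + 1 ≤ L → u (c + 1) - u c = u 1 - u 0 + ∑ b ∈ Finset.range c, v b := by
    intro c
    induction c with
    | zero => simp
    | succ c ih =>
      intro hc
      rw [h c hc, ih (by omega), Finset.sum_range_succ, add_assoc]
  intro a
  induction a with
  | zero => simp
  | succ a ih =>
    intro ha
    rw [← sub_add_cancel (u (a + 1)) (u a), hD a ha, Finset.sum_range_succ]
    rw [ih (by omega)]
    push_cast
    module

open Polynomial in
/-- The polynomials `(z - 1) ^ (2 * s + 1) * (z ^ (L - a) - z ^ a)` have bounded eigenexpansions.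
As a sequence in `a` they are antisymmetric about `L / 2`, equal to the eigenpolynomial at `a = 0`,
and their second differences are the polynomials of the same family with `s + 1` and `L - 2` in
place of `s` and `L`, which gives the induction. -/
theorem eigBound_family (N : ℕ) : ∀ L s a : ℕ, a ≤ L → 2 * s + 1 + L = N →
    EigBound N (2 * (4 * ((N : ℝ) + 1) ^ 2)⁻¹ ^ s)
      ((X - 1) ^ (2 * s + 1) * (X ^ (L - a) - X ^ a)) := by
  intro L
  induction L using Nat.strong_induction_on with
  | _ L ih =>
  intro s a ha hN
  set R : ℝ := 4 * ((N : ℝ) + 1) ^ 2 with hR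
  have hRpos : 0 < R := by positivity
  rcases Nat.eq_zero_or_pos L with rfl | hL
  · obtain rfl : a = 0 := by omega
    simpa using EigBound.zero.mono (by positivity)
  set u : ℕ → ℝ[X] := fun a => (X - 1) ^ (2 * s + 1) * (X ^ (L - a) - X ^ a) with hu
  set v : ℕ → ℝ[X] := fun b => (X - 1) ^ (2 * (s + 1) + 1) * (X ^ (L - 2 - b) - X ^ b) with hv
  have hdiff : ∀ b, b + 2 ≤ L → u (b + 2) - u (b + 1) = u (b + 1) - u b + v b := by
    intro b hb
    obtain ⟨m, rfl⟩ := Nat.exists_eq_add_of_le hb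
    have e1 : b + 2 + m - b = m + 2 := by omega
    have e2 : b + 2 + m - (b + 1) = m + 1 := by omega
    have e3 : b + 2 + m - (b + 2) = m := by omega
    have e4 : b + 2 + m - 2 - b = m := by omega
    simp only [hu, hv, e1, e2, e3, e4]
    ring
  have hu0 : EigBound N (R⁻¹ ^ s) (u 0) := by
    have : u 0 = _root_.eigPoly N s := by
      simp only [hu, _root_.eigPoly, Nat.sub_zero, pow_zero, ← hN, Nat.add_sub_cancel_left]
    rw [this]
    exact EigBound.eigPoly (by omega)
  have huL : u L = -u 0 := by
    simp only [hu, Nat.sub_self, Nat.sub_zero, pow_zero]; ring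
  set S : ℕ → ℝ[X] := fun a => ∑ c ∈ Finset.range a, ∑ b ∈ Finset.range c, v b with hS
  have hLN : (L : ℝ) ≤ N + 1 := by exact_mod_cast (by omega : L ≤ N + 1)
  have hSb : ∀ a, a ≤ L → EigBound N (R⁻¹ ^ s / 2) (S a) := by
    intro a ha
    have h1 : ∀ c ∈ Finset.range a,
        EigBound N (((N : ℝ) + 1) * (2 * R⁻¹ ^ (s + 1))) (∑ b ∈ Finset.range c, v b) := by
      intro c hc
      rw [Finset.mem_range] at hc
      have h2 : ∀ b ∈ Finset.range c, EigBound N (2 * R⁻¹ ^ (s + 1)) (v b) := by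
        intro b hb
        rw [Finset.mem_range] at hb
        exact ih (L - 2) (by omega) (s + 1) b (by omega) (by omega)
      refine (EigBound.sum_const _ _ _ h2).mono ?_
      rw [Finset.card_range]
      have : (c : ℝ) ≤ N + 1 := by exact_mod_cast (by omega : c ≤ N + 1)
      gcongr
    refine (EigBound.sum_const _ _ _ h1).mono ?_
    rw [Finset.card_range]
    have : (a : ℝ) ≤ N + 1 := by exact_mod_cast (by omega : a ≤ N + 1)
    calc (a : ℝ) * ((N + 1) * (2 * R⁻¹ ^ (s + 1)))
        ≤ (N + 1) * ((N + 1) * (2 * R⁻¹ ^ (s + 1))) := by gcongr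
      _ = (R / 2) * (R⁻¹ * R⁻¹ ^ s) := by rw [hR, pow_succ]; ring
      _ = R⁻¹ ^ s / 2 := by field_simp
  have hform := eq_sum_sum_of_second_difference u v L hdiff
  have hLr : (L : ℝ) ≠ 0 := by exact_mod_cast hL.ne'
  have hθ : (a : ℝ) / L ≤ 1 := by
    rw [div_le_one (by exact_mod_cast hL)]; exact_mod_cast ha
  have hθ0 : (0 : ℝ) ≤ (a : ℝ) / L := by positivity
  have hslope : (L : ℝ) • (u 1 - u 0) = -(2 : ℝ) • u 0 - S L := by
    have h1 := hform L le_rfl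
    rw [huL] at h1
    rw [eq_sub_iff_add_eq, ← sub_eq_zero]
    rw [← sub_eq_zero] at h1
    rw [← neg_eq_zero, ← h1]
    module
  have hua : u a = (1 - 2 * ((a : ℝ) / L)) • u 0 + S a + (-((a : ℝ) / L)) • S L := by
    rw [hform a ha]
    have : (a : ℝ) • (u 1 - u 0) = ((a : ℝ) / L) • ((L : ℝ) • (u 1 - u 0)) := by
      rw [smul_smul, div_mul_cancel₀ _ hLr]
    rw [this, hslope]
    simp only [hS]
    module
  change EigBound N _ (u a)
  rw [hua]
  refine (((hu0.smul _).add (hSb a ha)).add ((hSb L le_rfl).smul _)).mono ?_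
  have h1 : |1 - 2 * ((a : ℝ) / L)| ≤ 1 := by rw [abs_le]; constructor <;> linarith
  have h2 : |-((a : ℝ) / L)| ≤ 1 := by rw [abs_neg, abs_of_nonneg hθ0]; exact hθ
  have hq : 0 ≤ R⁻¹ ^ s := by positivity
  nlinarith [mul_le_mul_of_nonneg_right h1 hq, mul_le_mul_of_nonneg_right h2 hq]

open Polynomial in
theorem eigBound_step (N a : ℕ) (ha : a + 1 ≤ N) :
    EigBound N 2 ((X ^ (a + 1) + X ^ (N - (a + 1))) - (X ^ a + X ^ (N - a))) := by
  have h := (eigBound_family N (N - 1) 0 a (by omega) (by omega)).neg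
  obtain ⟨m, rfl⟩ := Nat.exists_eq_add_of_le ha
  have e1 : a + 1 + m - (a + 1) = m := by omega
  have e2 : a + 1 + m - a = m + 1 := by omega
  have e3 : a + 1 + m - 1 - a = m := by omega
  rw [e3] at h
  rw [e1, e2]
  convert h using 1
  · simp
  · ring

open Polynomial in
theorem eigBound_diff (N a : ℕ) : ∀ m : ℕ, a + m ≤ N →
    EigBound N (2 * m) ((X ^ (a + m) + X ^ (N - (a + m))) - (X ^ a + X ^ (N - a))) := by
  intro m
  induction m with
  | zero => intro _; simpa using EigBound.zero
  | succ m ih =>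
    intro hm
    have := (eigBound_step N (a + m) hm).add (ih (by omega))
    rw [sub_add_sub_cancel] at this
    exact this.mono (by push_cast; linarith)

open Polynomial in
/-- A pair of unit masses placed symmetrically, minus the uniform distribution of the same mass,
has a bounded eigenexpansion. -/
theorem eigBound_symm_sub_uniform (N j : ℕ) (hj : j ≤ N) :
    EigBound N (2 * ((N : ℝ) + 1))
      (X ^ j + X ^ (N - j) - (2 / ((N : ℝ) + 1)) • ∑ i ∈ Finset.range (N + 1), X ^ i) := by
  have hN : (N : ℝ) + 1 ≠ 0 := by positivity
  have h1 : ∀ b ∈ Finset.range (N + 1), EigBound N (2 * ((N : ℝ) + 1))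
      ((X ^ j + X ^ (N - j)) - (X ^ b + X ^ (N - b))) := by
    intro b hb
    have hb' : b ≤ N := Nat.lt_succ_iff.mp (Finset.mem_range.mp hb)
    rcases le_total b j with h | h
    · obtain ⟨m, rfl⟩ := Nat.exists_eq_add_of_le h
      have : (m : ℝ) ≤ N + 1 := by exact_mod_cast (by omega : m ≤ N + 1)
      exact (eigBound_diff N b m hj).mono (by linarith)
    · obtain ⟨m, rfl⟩ := Nat.exists_eq_add_of_le h
      have : (m : ℝ) ≤ N + 1 := by exact_mod_cast (by omega : m ≤ N + 1)
      have h2 := (eigBound_diff N j m hb').neg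
      rw [neg_sub] at h2
      exact h2.mono (by linarith)
  have h2 := (EigBound.sum_const _ _ _ h1).smul ((N : ℝ) + 1)⁻¹
  have hrefl : ∑ b ∈ Finset.range (N + 1), (X : ℝ[X]) ^ (N - b) =
      ∑ i ∈ Finset.range (N + 1), X ^ i := by
    simpa using Finset.sum_range_reflect (fun i => (X : ℝ[X]) ^ i) (N + 1)
  have heq : ((N : ℝ) + 1)⁻¹ • ∑ b ∈ Finset.range (N + 1),
      (((X : ℝ[X]) ^ j + X ^ (N - j)) - (X ^ b + X ^ (N - b))) =
      X ^ j + X ^ (N - j) - (2 / ((N : ℝ) + 1)) • ∑ i ∈ Finset.range (N + 1), X ^ i := by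
    rw [Finset.sum_sub_distrib, Finset.sum_const, Finset.sum_add_distrib, hrefl,
      Finset.card_range, smul_sub, ← Nat.cast_smul_eq_nsmul ℝ, smul_smul, ← two_smul ℝ, smul_smul]
    push_cast
    rw [inv_mul_cancel₀ hN, one_smul]
    congr 2
    ring
  rw [heq] at h2
  refine h2.mono (le_of_eq ?_)
  rw [Finset.card_range, abs_of_pos (by positivity)]
  push_cast
  field_simp

/-! ### Decay and summation over columns -/

open Polynomial in
theorem sum_abs_coeff_X_sub_one_mul_le (n : ℕ) (p : ℝ[X]) :
    ∑ j ∈ Finset.range n, |((X - 1) * p).coeff j| ≤ 2 * ∑ j ∈ Finset.range n, |p.coeff j| := by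
  have hshift : ∑ j ∈ Finset.range n, |(X * p).coeff j| ≤ ∑ j ∈ Finset.range n, |p.coeff j| := by
    cases n with
    | zero => simp
    | succ n =>
      rw [Finset.sum_range_succ', Finset.sum_range_succ]
      simp
  calc ∑ j ∈ Finset.range n, |((X - 1) * p).coeff j|
      ≤ ∑ j ∈ Finset.range n, (|(X * p).coeff j| + |p.coeff j|) := by
        refine Finset.sum_le_sum fun j _ => ?_
        rw [sub_mul, one_mul, coeff_sub]
        exact abs_sub _ _
    _ ≤ 2 * ∑ j ∈ Finset.range n, |p.coeff j| := by
        rw [Finset.sum_add_distrib, two_mul]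
        gcongr

open Polynomial in
theorem sum_abs_coeff_eigPoly_le (N t : ℕ) :
    ∑ j : Fin (N + 1), |(eigPoly N t).coeff j| ≤ 4 ^ (t + 1) := by
  have hbase : ∀ n L : ℕ, ∑ j ∈ Finset.range n, |(X ^ L - 1 : ℝ[X]).coeff j| ≤ 2 := by
    intro n L
    calc ∑ j ∈ Finset.range n, |(X ^ L - 1 : ℝ[X]).coeff j|
        ≤ ∑ j ∈ Finset.range n, ((if j = L then (1 : ℝ) else 0) + if j = 0 then 1 else 0) := by
          refine Finset.sum_le_sum fun j _ => ?_
          rw [coeff_sub, coeff_X_pow, coeff_one]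
          refine (abs_sub _ _).trans (le_of_eq ?_)
          split_ifs <;> simp
      _ ≤ 2 := by
          rw [Finset.sum_add_distrib, Finset.sum_ite_eq', Finset.sum_ite_eq']
          split_ifs <;> norm_num
  have hpow : ∀ (d : ℕ) (p : ℝ[X]), ∑ j ∈ Finset.range (N + 1), |((X - 1) ^ d * p).coeff j| ≤
      2 ^ d * ∑ j ∈ Finset.range (N + 1), |p.coeff j| := by
    intro d p
    induction d with
    | zero => simp
    | succ d ih =>
      rw [pow_succ', mul_assoc, pow_succ', mul_assoc]
      exact (sum_abs_coeff_X_sub_one_mul_le _ _).trans (by gcongr)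
  rw [Fin.sum_univ_eq_sum_range (fun j => |(eigPoly N t).coeff j|), eigPoly]
  refine (hpow _ _).trans ?_
  calc (2 : ℝ) ^ (2 * t + 1) * _ ≤ 2 ^ (2 * t + 1) * 2 := by gcongr; exact hbase _ _
    _ = 4 ^ (t + 1) := by
      rw [← pow_succ, show 2 * t + 1 + 1 = 2 * (t + 1) by ring, pow_mul]; norm_num

theorem coeffVec_eigPoly_vecMul_pow (N t k : ℕ) :
    coeffVec N (eigPoly N t) ᵥ* shelfM (N + 1) ^ k =
      (((1 / 4 : ℝ) ^ k) ^ (t + 1)) • coeffVec N (eigPoly N t) := by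
  induction k with
  | zero => simp
  | succ k ih =>
    rw [pow_succ, ← vecMul_vecMul, ih, smul_vecMul, coeffVec_eigPoly_vecMul, smul_smul,
      ← mul_pow, ← pow_succ]

/-- A bound for the `j`-th entry after `k` shuffles, uniform over all vectors with
eigenexpansion bounded by `W`. -/
noncomputable def entryBound (N : ℕ) (W : ℝ) (k : ℕ) (j : Fin (N + 1)) : ℝ :=
  ∑ t ∈ Finset.range (N + 1), W * (4 * ((N : ℝ) + 1) ^ 2) ^ t * ((1 / 4 : ℝ) ^ k) ^ (t + 1) *
    |(eigPoly N t).coeff j|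

theorem EigBound.abs_vecMul_pow_le {N : ℕ} {W : ℝ} {p : Polynomial ℝ} (h : EigBound N W p)
    (k : ℕ) (j : Fin (N + 1)) :
    |(coeffVec N p ᵥ* shelfM (N + 1) ^ k) j| ≤ entryBound N W k j := by
  obtain ⟨b, hb, rfl⟩ := h
  rw [map_sum, sum_vecMul, Finset.sum_apply]
  refine (Finset.abs_sum_le_sum_abs _ _).trans (Finset.sum_le_sum fun t _ => ?_)
  rw [map_smul, smul_vecMul, coeffVec_eigPoly_vecMul_pow, Pi.smul_apply, Pi.smul_apply,
    smul_eq_mul, smul_eq_mul, coeffVec_apply, abs_mul, abs_mul, mul_assoc,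
    abs_of_pos (by positivity : (0 : ℝ) < ((1 / 4 : ℝ) ^ k) ^ (t + 1))]
  exact mul_le_mul_of_nonneg_right (hb t) (by positivity)

/-- Once `4 ^ k` dominates `(N + 1) ^ 2`, the eigenexpansion is summed by a geometric series whose
first term is the contribution of the eigenvalue `1 / 4`. -/
theorem sum_entryBound_le (N : ℕ) (W : ℝ) (hW : 0 ≤ W) (k : ℕ)
    (hk : 16 * ((N : ℝ) + 1) ^ 2 * (1 / 4) ^ k ≤ 1 / 2) :
    ∑ j, entryBound N W k j ≤ 8 * W * (1 / 4) ^ k := by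
  set x : ℝ := (1 / 4) ^ k with hx
  have hx0 : 0 ≤ x := by positivity
  set y : ℝ := 16 * ((N : ℝ) + 1) ^ 2 * x with hy
  have hy0 : 0 ≤ y := by positivity
  unfold entryBound
  rw [Finset.sum_comm]
  calc ∑ t ∈ Finset.range (N + 1), ∑ j : Fin (N + 1),
        W * (4 * ((N : ℝ) + 1) ^ 2) ^ t * x ^ (t + 1) * |(eigPoly N t).coeff j|
      ≤ ∑ t ∈ Finset.range (N + 1), 4 * W * x * y ^ t := by
        refine Finset.sum_le_sum fun t _ => ?_
        rw [← Finset.mul_sum]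
        calc _ ≤ W * (4 * ((N : ℝ) + 1) ^ 2) ^ t * x ^ (t + 1) * 4 ^ (t + 1) := by
              gcongr; exact sum_abs_coeff_eigPoly_le N t
          _ = 4 * W * x * ((4 * ((N : ℝ) + 1) ^ 2) ^ t * x ^ t * 4 ^ t) := by ring
          _ = 4 * W * x * y ^ t := by
              rw [← mul_pow, ← mul_pow, hy]; ring
    _ ≤ ∑ t ∈ Finset.range (N + 1), 4 * W * x * (1 / 2) ^ t := by gcongr
    _ ≤ 4 * W * x * 2 := by
        rw [← Finset.mul_sum]
        gcongr
        exact sum_geometric_two_le _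
    _ = 8 * W * x := by ring

theorem shelfM_rev (N : ℕ) (i j : Fin (N + 1)) :
    shelfM (N + 1) i j.rev = shelfM (N + 1) i j := by
  have hj : (j : ℕ) ≤ N := Nat.lt_succ_iff.mp j.2
  simp only [shelfM, Fin.val_rev, Nat.add_sub_cancel, Nat.add_sub_add_right, Nat.sub_sub_self hj]
  ring

theorem shelfM_nonneg (n : ℕ) (i j : Fin n) : 0 ≤ shelfM n i j := by
  unfold shelfM; positivity

theorem sum_shelfM (N : ℕ) (i : Fin (N + 1)) : ∑ j, shelfM (N + 1) i j = 1 := by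
  have hc : ∑ j : Fin (N + 1), (Nat.choose i j : ℝ) = 2 ^ (i : ℕ) := by
    rw [Fin.sum_univ_eq_sum_range (fun j => (Nat.choose i j : ℝ))]
    have h1 : ∑ j ∈ Finset.range (N + 1), Nat.choose i j =
        ∑ j ∈ Finset.range (i + 1), Nat.choose i j := by
      symm
      refine Finset.sum_subset (Finset.range_mono (by omega)) fun j _ hj => ?_
      exact Nat.choose_eq_zero_of_lt (by simpa [Nat.lt_succ_iff] using hj)
    rw [← Nat.cast_sum, h1, Nat.sum_range_choose]
    norm_num
  have hr : ∑ j : Fin (N + 1), (Nat.choose i (N - j) : ℝ) = 2 ^ (i : ℕ) := by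
    rw [← hc, ← Equiv.sum_comp Fin.revPerm]
    refine Finset.sum_congr rfl fun j _ => ?_
    have hj : (j : ℕ) ≤ N := Nat.lt_succ_iff.mp j.2
    simp [Fin.val_rev, Nat.sub_sub_self hj]
  simp only [shelfM, Nat.add_sub_cancel]
  rw [← Finset.mul_sum, Finset.sum_add_distrib, hc, hr, pow_succ, ← two_mul, one_div, inv_pow]
  field_simp

open Polynomial in
/-- After one shuffle a row is symmetric under reversal, hence a convex combination of
symmetrically placed pairs of masses. -/
theorem exists_eigBound_row (N : ℕ) (i : Fin (N + 1)) :
    ∃ p : ℝ[X], EigBound N ((N : ℝ) + 1) p ∧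
      shelfM (N + 1) i = coeffVec N p + (1 / ((N : ℝ) + 1)) • (fun _ => (1 : ℝ)) := by
  have hbd : ∀ j ∈ (Finset.univ : Finset (Fin (N + 1))),
      EigBound N (shelfM (N + 1) i j * ((N : ℝ) + 1))
      ((shelfM (N + 1) i j / 2) • (X ^ (j : ℕ) + X ^ (N - j) -
        (2 / ((N : ℝ) + 1)) • ∑ m ∈ Finset.range (N + 1), (X : ℝ[X]) ^ m)) := by
    intro j _
    refine ((eigBound_symm_sub_uniform N j (Nat.lt_succ_iff.mp j.2)).smul
      (shelfM (N + 1) i j / 2)).mono (le_of_eq ?_)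
    rw [abs_of_nonneg (div_nonneg (shelfM_nonneg _ _ _) zero_le_two)]
    ring
  refine ⟨_, (EigBound.sum _ _ _ hbd).mono
    (by rw [← Finset.sum_mul, sum_shelfM, one_mul]), ?_⟩
  ext m
  have hm : (m : ℕ) ≤ N := Nat.lt_succ_iff.mp m.2
  have hones : (∑ m ∈ Finset.range (N + 1), (X : ℝ[X]) ^ m).coeff m = 1 := by
    rw [finsetSum_coeff]
    simp only [coeff_X_pow]
    rw [Finset.sum_ite_eq]
    simp [hm]
  have hA : ∑ j : Fin (N + 1), shelfM (N + 1) i j * (X ^ (j : ℕ) : ℝ[X]).coeff m =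
      shelfM (N + 1) i m := by
    simp only [coeff_X_pow, ← Fin.ext_iff]
    simp
  have hB : ∑ j : Fin (N + 1), shelfM (N + 1) i j * (X ^ (N - (j : ℕ)) : ℝ[X]).coeff m =
      shelfM (N + 1) i m := by
    rw [← Equiv.sum_comp Fin.revPerm]
    refine Eq.trans (Finset.sum_congr rfl fun j _ => ?_) hA
    have hj : (j : ℕ) ≤ N := Nat.lt_succ_iff.mp j.2
    simp only [Fin.revPerm_apply, shelfM_rev, Fin.val_rev, Nat.add_sub_add_right,
      Nat.sub_sub_self hj]
  have hsum : ∑ j : Fin (N + 1), (shelfM (N + 1) i j / 2) * ((X ^ (j : ℕ) : ℝ[X]).coeff m +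
      (X ^ (N - (j : ℕ)) : ℝ[X]).coeff m - 2 / ((N : ℝ) + 1) * 1) =
      (shelfM (N + 1) i m + shelfM (N + 1) i m) / 2 - 1 / ((N : ℝ) + 1) := by
    have h1 := sum_shelfM N i
    calc _ = ∑ j : Fin (N + 1), (1 / 2 * (shelfM (N + 1) i j * (X ^ (j : ℕ) : ℝ[X]).coeff m) +
          1 / 2 * (shelfM (N + 1) i j * (X ^ (N - (j : ℕ)) : ℝ[X]).coeff m) -
          (1 / ((N : ℝ) + 1)) * shelfM (N + 1) i j) :=
            Finset.sum_congr rfl fun j _ => by ring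
      _ = _ := by
        rw [Finset.sum_sub_distrib, Finset.sum_add_distrib, ← Finset.mul_sum, ← Finset.mul_sum,
          ← Finset.mul_sum, hA, hB, h1]
        ring
  rw [Pi.add_apply, coeffVec_apply, finsetSum_coeff]
  simp only [coeff_smul, coeff_sub, coeff_add, hones, smul_eq_mul, Pi.smul_apply]
  rw [hsum]
  ring

theorem one_vecMul_shelfM_pow (N k : ℕ) :
    (fun _ => 1 : Fin (N + 1) → ℝ) ᵥ* shelfM (N + 1) ^ k = fun _ => 1 := by
  induction k with
  | zero => simp
  | succ k ih => rw [pow_succ, ← vecMul_vecMul, ih, one_vecMul_shelfM]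

theorem abs_shelfM_pow_sub_le (N k : ℕ) (i j : Fin (N + 1)) :
    |(shelfM (N + 1) ^ (k + 1)) i j - 1 / ((N : ℝ) + 1)| ≤ entryBound N ((N : ℝ) + 1) k j := by
  obtain ⟨p, hp, hrow⟩ := exists_eigBound_row N i
  have h : (shelfM (N + 1) ^ (k + 1)) i j =
      (shelfM (N + 1) i ᵥ* shelfM (N + 1) ^ k) j := by
    rw [pow_succ']; rfl
  rw [h, hrow, add_vecMul, smul_vecMul, one_vecMul_shelfM_pow]
  simpa using hp.abs_vecMul_pow_le k j

/-- Comparison with the uniform distribution entry by entry controls the sum of column maxima. -/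
theorem abs_sum_iSup_sub_one_le (N : ℕ) (A : Matrix (Fin (N + 1)) (Fin (N + 1)) ℝ)
    (g : Fin (N + 1) → ℝ) (h : ∀ i j, |A i j - 1 / ((N : ℝ) + 1)| ≤ g j) :
    |(∑ j, ⨆ i, A i j) - 1| ≤ ∑ j, g j := by
  have h1 : (1 : ℝ) = ∑ _j : Fin (N + 1), 1 / ((N : ℝ) + 1) := by
    rw [Finset.sum_const, Finset.card_univ, Fintype.card_fin, nsmul_eq_mul]
    push_cast
    field_simp
  rw [h1, ← Finset.sum_sub_distrib]
  refine (Finset.abs_sum_le_sum_abs _ _).trans (Finset.sum_le_sum fun j _ => ?_)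
  rw [abs_sub_le_iff]
  constructor
  · rw [sub_le_iff_le_add]
    refine ciSup_le fun i => ?_
    have := (abs_le.mp (h i j)).2
    linarith
  · have h2 : A 0 j ≤ ⨆ i, A i j :=
      le_ciSup (f := fun i => A i j) (Set.finite_range _).bddAbove 0
    have := (abs_le.mp (h 0 j)).1
    linarith

theorem optimal_no_feedback_after_many_shuffles :
    ∃ C : ℝ, 0 < C ∧ ∀ ε : ℝ, 0 < ε → ∃ N : ℕ, ∀ n : ℕ, N ≤ n →
      ∀ k : ℕ, (1 + ε) * Real.logb 2 (n : ℝ) ≤ (k : ℝ) →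
        |(∑ j : Fin n, ⨆ i : Fin n, (shelfM n ^ k) i j) - 1| ≤
          C * (n : ℝ) ^ (-2 * ε : ℝ) := by
  refine ⟨32, by norm_num, fun ε hε => ?_⟩
  have htend : Filter.Tendsto (fun n : ℕ => (n : ℝ) ^ (-(2 * ε))) Filter.atTop (nhds 0) :=
    (tendsto_rpow_neg_atTop (by positivity)).comp tendsto_natCast_atTop_atTop
  obtain ⟨N₀, hN₀⟩ := Filter.eventually_atTop.mp
    (htend.eventually (ge_mem_nhds (show (0 : ℝ) < 1 / 128 by norm_num)))
  refine ⟨max N₀ 2, fun n hn k hk => ?_⟩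
  have hn2 : 2 ≤ n := (le_max_right _ _).trans hn
  have hsmall : (n : ℝ) ^ (-(2 * ε)) ≤ 1 / 128 := hN₀ n ((le_max_left _ _).trans hn)
  have hn1 : (1 : ℝ) < n := by exact_mod_cast hn2
  have hn0 : (0 : ℝ) < n := by linarith
  rw [show -2 * ε = -(2 * ε) by ring]
  -- The hypothesis on `k` says `2 ^ k ≥ n ^ (1 + ε)`; squaring, `n ^ 2 / 4 ^ k ≤ n ^ (-2 * ε)`.
  have hdecay : (n : ℝ) ^ 2 * (1 / 4) ^ k ≤ (n : ℝ) ^ (-(2 * ε)) := by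
    have h4 : ((n : ℝ) ^ (1 + ε)) ^ 2 ≤ (4 : ℝ) ^ k := by
      have h2 : (n : ℝ) ^ (1 + ε) ≤ 2 ^ k := by
        rw [← Real.logb_rpow_eq_mul_logb_of_pos hn0] at hk
        rw [Real.logb_le_iff_le_rpow (by norm_num) (by positivity)] at hk
        simpa using hk
      calc ((n : ℝ) ^ (1 + ε)) ^ 2 ≤ (2 ^ k) ^ 2 := by gcongr
        _ = 4 ^ k := by rw [← pow_mul, mul_comm, pow_mul]; norm_num
    have hsplit : ((n : ℝ) ^ (1 + ε)) ^ 2 = n ^ 2 * (n : ℝ) ^ (2 * ε) := by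
      rw [← Real.rpow_natCast, ← Real.rpow_mul hn0.le, ← Real.rpow_natCast, ← Real.rpow_add hn0]
      congr 1
      push_cast
      ring
    rw [hsplit] at h4
    rw [Real.rpow_neg hn0.le, one_div, inv_pow, ← div_eq_mul_inv, div_le_iff₀ (by positivity),
      inv_mul_eq_div, le_div_iff₀ (by positivity)]
    exact h4
  obtain ⟨m, rfl⟩ : ∃ m, k = m + 1 := by
    refine ⟨k - 1, ?_⟩
    have : 0 < k := by
      have h1 : 0 < (1 + ε) * Real.logb 2 n :=
        mul_pos (by linarith) (Real.logb_pos (by norm_num) hn1)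
      exact_mod_cast h1.trans_le hk
    omega
  obtain ⟨N, rfl⟩ : ∃ N, n = N + 1 := ⟨n - 1, by omega⟩
  push_cast at *
  rw [pow_succ (1 / 4 : ℝ)] at hdecay
  refine (abs_sum_iSup_sub_one_le N _ _ (abs_shelfM_pow_sub_le N m)).trans ?_
  refine (sum_entryBound_le N _ (by positivity) m (by linarith)).trans ?_
  have hx : (0 : ℝ) ≤ (1 / 4) ^ m := by positivity
  have : ((N : ℝ) + 1) * (1 / 4) ^ m ≤ ((N : ℝ) + 1) ^ 2 * (1 / 4) ^ m := by
    gcongr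
    nlinarith
  linarith
end
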